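/- Let f ∈ ℬ be convenient and Newton nondegenerate with Newton polytope P, and assume that every closed face of the Newton boundary of P is a simplex. Let v ∈ Box(P) ∩ ℕⁿ be a point all of whose coordinates are ≥ 1 (i.e. v does not belong to any coordinate hyperplane), and let Δ(v) be the smallest closed face Δ of the Newton boundary with v ∈ ℝ₊·Δ. Then for every integer j with 0 ≤ j ≤ n − 1 − dim Δ(v), one has gr^𝒩_{ν(v)+j}(ℬ/ℒ) ≠ 0; that is, the values ν(v), ν(v)+1, …, ν(v) + n − 1 − dim Δ(v) all occur in the toric Newton spectrum of f. -/

import Mathlib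

open MvPolynomial

namespace ToricNewton

section
variable {σ : Type*} [Fintype σ] [DecidableEq σ]

/-- Coercion of a lattice point of `ℕ^σ` into `ℝ^σ`. -/
def natToR (v : σ → ℕ) : σ → ℝ := fun i => (v i : ℝ)

/-- Coercion of an exponent (finitely supported) into `ℝ^σ`. -/
def toR (m : σ →₀ ℕ) : σ → ℝ := fun i => (m i : ℝ)

/-- The Newton polytope of a polynomial: the convex hull of `{0} ∪ supp f`. -/
noncomputable def newtonPolytope (f : MvPolynomial σ ℂ) : Set (σ → ℝ) :=
  convexHull ℝ ({0} ∪ (toR '' (f.support : Set (σ →₀ ℕ))))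

/-- The Newton function `ν`, which for a convenient polynomial is the gauge
(Minkowski functional) of the Newton polytope. -/
noncomputable def nu (f : MvPolynomial σ ℂ) (x : σ → ℝ) : ℝ :=
  gauge (newtonPolytope f) x

/-- `f` is convenient if for each variable `i` some pure power `uᵢ^k`, `k ≥ 1`,
occurs in `f` with nonzero coefficient. -/
def Convenient (f : MvPolynomial σ ℂ) : Prop :=
  ∀ i : σ, ∃ k : ℕ, 1 ≤ k ∧ f.coeff (Finsupp.single i k) ≠ 0

/-- `Δ` is a (nonempty exposed) closed face of `P`. -/
def IsFace (P Δ : Set (σ → ℝ)) : Prop :=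
  Δ.Nonempty ∧ ∃ (l : (σ → ℝ) →ₗ[ℝ] ℝ) (c : ℝ),
    (∀ x ∈ P, l x ≤ c) ∧ Δ = {x ∈ P | l x = c}

/-- A face of the Newton boundary: a closed face of the Newton polytope not
containing the origin. -/
def NBFace (f : MvPolynomial σ ℂ) (Δ : Set (σ → ℝ)) : Prop :=
  IsFace (newtonPolytope f) Δ ∧ (0 : σ → ℝ) ∉ Δ

open Classical in
/-- The truncation `g_Δ` of `g` to the monomials whose exponents lie in `Δ`. -/
noncomputable def faceRestrict (Δ : Set (σ → ℝ)) (g : MvPolynomial σ ℂ) : MvPolynomial σ ℂ :=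
  ∑ m ∈ g.support, if toR m ∈ Δ then monomial m (g.coeff m) else 0

/-- `f` is Newton nondegenerate: for every closed face `Δ` of the Newton boundary
the system `(u₁ ∂f/∂u₁)_Δ = ⋯ = (uₙ ∂f/∂uₙ)_Δ = 0` has no solution in `(ℂ*)ⁿ`. -/
def Nondegenerate (f : MvPolynomial σ ℂ) : Prop :=
  ∀ Δ : Set (σ → ℝ), NBFace f Δ →
    ¬ ∃ x : σ → ℂ, (∀ i, x i ≠ 0) ∧
        ∀ i, eval x (faceRestrict Δ (X i * pderiv i f)) = 0

/-- The ideal `ℒ` generated by the `uᵢ ∂f/∂uᵢ`. -/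
noncomputable def LIdeal (f : MvPolynomial σ ℂ) : Ideal (MvPolynomial σ ℂ) :=
  Ideal.span (Set.range fun i => X i * pderiv i f)

/-- The Jacobian ideal `ℐ` generated by the `∂f/∂uᵢ`. -/
noncomputable def IIdeal (f : MvPolynomial σ ℂ) : Ideal (MvPolynomial σ ℂ) :=
  Ideal.span (Set.range fun i => pderiv i f)

/-- The Newton filtration `𝒩_α ℬ`: the span of the monomials `u^m` with `ν(m) ≤ α`. -/
noncomputable def Nle (f : MvPolynomial σ ℂ) (α : ℝ) : Submodule ℂ (MvPolynomial σ ℂ) where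
  carrier := {g | ∀ m ∈ g.support, nu f (toR m) ≤ α}
  zero_mem' := by simp
  add_mem' := by
    intro a b ha hb m hm
    rcases Finset.mem_union.mp (MvPolynomial.support_add hm) with h | h
    · exact ha m h
    · exact hb m h
  smul_mem' := by
    intro c a ha m hm
    exact ha m (MvPolynomial.support_smul hm)

/-- The filtration `𝒩_{<α} ℬ`. -/
noncomputable def Nlt (f : MvPolynomial σ ℂ) (α : ℝ) : Submodule ℂ (MvPolynomial σ ℂ) where
  carrier := {g | ∀ m ∈ g.support, nu f (toR m) < α}
  zero_mem' := by simp
  add_mem' := by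
    intro a b ha hb m hm
    rcases Finset.mem_union.mp (MvPolynomial.support_add hm) with h | h
    · exact ha m h
    · exact hb m h
  smul_mem' := by
    intro c a ha m hm
    exact ha m (MvPolynomial.support_smul hm)

/-- The twisted filtration `W_α ℬ`: the span of the monomials `u^m` with
`ν(m + (1,…,1)) ≤ α`. -/
noncomputable def Wle (f : MvPolynomial σ ℂ) (α : ℝ) : Submodule ℂ (MvPolynomial σ ℂ) where
  carrier := {g | ∀ m ∈ g.support, nu f (toR m + 1) ≤ α}
  zero_mem' := by simp
  add_mem' := by
    intro a b ha hb m hm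
    rcases Finset.mem_union.mp (MvPolynomial.support_add hm) with h | h
    · exact ha m h
    · exact hb m h
  smul_mem' := by
    intro c a ha m hm
    exact ha m (MvPolynomial.support_smul hm)

/-- The twisted filtration `W_{<α} ℬ`. -/
noncomputable def Wlt (f : MvPolynomial σ ℂ) (α : ℝ) : Submodule ℂ (MvPolynomial σ ℂ) where
  carrier := {g | ∀ m ∈ g.support, nu f (toR m + 1) < α}
  zero_mem' := by simp
  add_mem' := by
    intro a b ha hb m hm
    rcases Finset.mem_union.mp (MvPolynomial.support_add hm) with h | h
    · exact ha m h
    · exact hb m h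
  smul_mem' := by
    intro c a ha m hm
    exact ha m (MvPolynomial.support_smul hm)

/-- The graded piece `gr^𝒩_α(ℬ/ℒ) = (𝒩_α ℬ + ℒ)/(𝒩_{<α} ℬ + ℒ)`, realized as the
image of `𝒩_α ℬ + ℒ` in `ℬ/(𝒩_{<α} ℬ + ℒ)`. -/
noncomputable def grN (f : MvPolynomial σ ℂ) (α : ℝ) :
    Submodule ℂ (MvPolynomial σ ℂ ⧸ (Nlt f α ⊔ (LIdeal f).restrictScalars ℂ)) :=
  Submodule.map (Nlt f α ⊔ (LIdeal f).restrictScalars ℂ).mkQ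
    (Nle f α ⊔ (LIdeal f).restrictScalars ℂ)

/-- `dim_ℂ gr^𝒩_α(ℬ/ℒ)`. -/
noncomputable def grDim (f : MvPolynomial σ ℂ) (α : ℝ) : ℕ :=
  Module.finrank ℂ (grN f α)

/-- The graded piece `gr^W_α(ℬ/ℐ) = (W_α ℬ + ℐ)/(W_{<α} ℬ + ℐ)`. -/
noncomputable def grW (f : MvPolynomial σ ℂ) (α : ℝ) :
    Submodule ℂ (MvPolynomial σ ℂ ⧸ (Wlt f α ⊔ (IIdeal f).restrictScalars ℂ)) :=
  Submodule.map (Wlt f α ⊔ (IIdeal f).restrictScalars ℂ).mkQ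
    (Wle f α ⊔ (IIdeal f).restrictScalars ℂ)

/-- `dim_ℂ gr^W_α(ℬ/ℐ)`. -/
noncomputable def grWDim (f : MvPolynomial σ ℂ) (α : ℝ) : ℕ :=
  Module.finrank ℂ (grW f α)

/-- The dimension of a face, i.e. of the direction of its affine span. -/
noncomputable def faceDim (Δ : Set (σ → ℝ)) : ℕ :=
  Module.finrank ℝ (affineSpan ℝ Δ).direction

/-- `Δ` is a simplex: the convex hull of an affinely independent family. -/
def IsSimplex (Δ : Set (σ → ℝ)) : Prop :=
  ∃ (k : ℕ) (p : Fin (k + 1) → (σ → ℝ)), AffineIndependent ℝ p ∧ Δ = convexHull ℝ (Set.range p)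

/-- The union of the coordinate hyperplanes. -/
def coordHyperplanes (σ : Type*) : Set (σ → ℝ) := ⋃ i : σ, {x : σ → ℝ | x i = 0}

/-- `Box(Δ)`: the set of combinations `Σ q_ℓ b_ℓ`, `q_ℓ ∈ [0,1)`, of the vertices
(extreme points) of `Δ`. -/
def Box (Δ : Set (σ → ℝ)) : Set (σ → ℝ) :=
  {x | ∃ s : Finset (σ → ℝ), ↑s ⊆ Δ.extremePoints ℝ ∧
      ∃ q : (σ → ℝ) → ℝ, (∀ b ∈ s, 0 ≤ q b ∧ q b < 1) ∧ x = ∑ b ∈ s, q b • b}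

/-- `Δ ∈ ℱ(P)`: a closed face of the Newton polytope of `f` not contained in the
union of the coordinate hyperplanes. -/
def FcalMem (f : MvPolynomial σ ℂ) (Δ : Set (σ → ℝ)) : Prop :=
  IsFace (newtonPolytope f) Δ ∧ ¬ Δ ⊆ coordHyperplanes σ

/-- `Box(P)`: the union of `Box(Δ)` over the closed faces of the Newton boundary
not contained in the union of the coordinate hyperplanes. -/
def BoxP (f : MvPolynomial σ ℂ) : Set (σ → ℝ) :=
  ⋃ Δ ∈ {Δ : Set (σ → ℝ) | NBFace f Δ ∧ ¬ Δ ⊆ coordHyperplanes σ}, Box Δ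

/-- The cone `ℝ₊·Δ` over `Δ`. -/
def cone0 (Δ : Set (σ → ℝ)) : Set (σ → ℝ) :=
  {x | ∃ t : ℝ, 0 ≤ t ∧ ∃ y ∈ Δ, x = t • y}

/-- The restriction of `f` obtained by setting the variables in `S` to zero. -/
noncomputable def restrictZero (S : Finset σ) (f : MvPolynomial σ ℂ) :
    MvPolynomial {j : σ // j ∉ S} ℂ :=
  aeval (fun j : σ => if h : j ∉ S then X (⟨j, h⟩ : {j : σ // j ∉ S}) else 0) f

end

end ToricNewton

/-!
Choose a generic vector `ξ` with positive coordinates. Sending a lattice point `a` to the facet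
whose cone contains `a + ε ξ` for small `ε > 0` splits `ℕ^σ` into half-open simplicial cones, one
for each facet. Let `M` be the span of the monomials in one of them, a module over the semigroup
algebra of the closed cone. Nondegeneracy says, through the Nullstellensatz, that the parts `G_j`
of `u_j ∂_j f` on the facet generate, up to radical, the same ideal as the monomials `x_k` of its
vertices. One can therefore exchange the regular sequence `x` on `M`, one entry at a time, for a
sequence `F` which spans the same space as `G`. Each exchange preserves the dimensions of the
graded pieces of the quotient, so `M / (G) M` vanishes in no degree in which `M / (x) M` does not.
Moreover `G` has no relations on `M` except the trivial ones. Hence, for the Newton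
filtration refined by `ξ`, passing to leading forms loses nothing: a nonzero class of `M / (G) M`
gives a nonzero class of the same degree in the graded module of `ℬ / ℒ`.

Now let `v` be a box point and choose `j` vertices of a facet whose cone contains `v` at which the
coordinates of `v` vanish. If the coordinates of `ξ` at exactly these vertices are negative, then
the sum of `v` and the chosen vertices lies in the half-open cone and its monomial is not in
`(x) M`. This is a nonzero class of degree `ν(v) + j`.
-/

namespace ToricNewton

section MixedRegularity

open Pointwise

variable {A M ι : Type*} [CommRing A] [AddCommGroup M] [Module A M]

theorem mem_sup_smul_top_iff {U : Submodule A M} {r : A} {m : M} :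
    m ∈ U ⊔ r • (⊤ : Submodule A M) ↔ ∃ m', m - r • m' ∈ U := by
  rw [sup_comm, Submodule.mem_sup]
  constructor
  · rintro ⟨_, hy, z, hz, rfl⟩
    obtain ⟨m', -, rfl⟩ := (Submodule.mem_smul_pointwise_iff_exists _ _ _).1 hy
    exact ⟨m', by simpa using hz⟩
  · rintro ⟨m', h⟩
    exact ⟨r • m', Submodule.smul_mem_pointwise_smul _ _ _ trivial, _, h, by simp⟩

theorem isSMulRegular_quotient_of_forall_pow {U : Submodule A M} {x F : A}
    (hsep : ∀ m : M, (∀ k : ℕ, ∃ n, m - x ^ k • n ∈ U) → m ∈ U)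
    (hx : IsSMulRegular (M ⧸ U) x)
    (hF : IsSMulRegular (M ⧸ (U ⊔ x • (⊤ : Submodule A M))) F) :
    IsSMulRegular (M ⧸ U) F := by
  simp only [isSMulRegular_quotient_iff_mem_of_smul_mem, mem_sup_smul_top_iff] at *
  intro m hm
  suffices ∀ k : ℕ, ∃ m' : M, m - x ^ k • m' ∈ U ∧ F • m' ∈ U from
    hsep m fun k => (this k).imp fun _ h => h.1
  intro k
  induction k with
  | zero => exact ⟨m, by simp, hm⟩
  | succ k ih =>
    obtain ⟨m', h1, h2⟩ := ih
    obtain ⟨m'', h3⟩ := hF m' ⟨0, by simpa using h2⟩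
    refine ⟨m'', ?_, hx _ ?_⟩
    · convert U.add_mem h1 (U.smul_mem (x ^ k) h3) using 1
      rw [smul_sub, smul_smul, pow_succ]
      abel
    · convert U.sub_mem h2 (U.smul_mem F h3) using 1
      rw [smul_sub, smul_comm F x]
      abel

theorem isSMulRegular_quotient_sup_smul {U : Submodule A M} {x F : A}
    (hx : IsSMulRegular (M ⧸ U) x)
    (hF : IsSMulRegular (M ⧸ (U ⊔ x • (⊤ : Submodule A M))) F) :
    IsSMulRegular (M ⧸ (U ⊔ F • (⊤ : Submodule A M))) x := by
  simp only [isSMulRegular_quotient_iff_mem_of_smul_mem, mem_sup_smul_top_iff] at *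
  rintro m ⟨y, hy⟩
  obtain ⟨y', hy'⟩ := hF y ⟨m, by simpa using U.neg_mem hy⟩
  refine ⟨y', hx _ ?_⟩
  convert U.add_mem hy (U.smul_mem F hy') using 1
  rw [smul_sub, smul_sub, smul_comm F x]
  abel

theorem isSMulRegular_quotient_of_pow_mem {I : Ideal A} {x F : A} {k : ℕ}
    (hx : IsSMulRegular (M ⧸ (I • (⊤ : Submodule A M))) x) (hk : x ^ k ∈ I ⊔ Ideal.span {F}) :
    IsSMulRegular (M ⧸ (I • (⊤ : Submodule A M))) F := by
  have hxk := hx.pow k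
  rw [isSMulRegular_quotient_iff_mem_of_smul_mem] at hxk ⊢
  intro m hm
  obtain ⟨z, hz, w, hw, hzw⟩ := Submodule.mem_sup.1 hk
  obtain ⟨b, rfl⟩ := Ideal.mem_span_singleton'.1 hw
  refine hxk m ?_
  rw [← hzw, add_smul, mul_smul]
  exact add_mem (Submodule.smul_mem_smul hz trivial) (Submodule.smul_mem _ b hm)

variable (M) in
/-- The submodule `(x_p, F_q : p ∈ P, q ∈ Q) M`, which interpolates between `(x) M` and `(F) M`. -/
def mixedSubmodule (x F : ι → A) (P Q : Finset ι) : Submodule A M :=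
  Ideal.span (x '' P ∪ F '' Q) • ⊤

variable {x F : ι → A} {P Q : Finset ι} {c : ι}

theorem mixedSubmodule_empty : mixedSubmodule M x F ∅ ∅ = ⊥ := by
  simp [mixedSubmodule]

theorem smul_mem_mixedSubmodule_left (hc : c ∈ P) (m : M) :
    x c • m ∈ mixedSubmodule M x F P Q :=
  Submodule.smul_mem_smul (Ideal.subset_span (.inl ⟨c, hc, rfl⟩)) trivial

theorem smul_mem_mixedSubmodule_right (hc : c ∈ Q) (m : M) :
    F c • m ∈ mixedSubmodule M x F P Q :=
  Submodule.smul_mem_smul (Ideal.subset_span (.inr ⟨c, hc, rfl⟩)) trivial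

theorem mixedSubmodule_insert_left [DecidableEq ι] :
    mixedSubmodule M x F (insert c P) Q = mixedSubmodule M x F P Q ⊔ x c • ⊤ := by
  simp only [mixedSubmodule, Finset.coe_insert, Set.image_insert_eq, Set.insert_union,
    Ideal.span_insert, Submodule.sup_smul, Submodule.ideal_span_singleton_smul, sup_comm]

theorem mixedSubmodule_insert_right [DecidableEq ι] :
    mixedSubmodule M x F P (insert c Q) = mixedSubmodule M x F P Q ⊔ F c • ⊤ := by
  simp only [mixedSubmodule, Finset.coe_insert, Set.image_insert_eq, Set.union_insert,
    Ideal.span_insert, Submodule.sup_smul, Submodule.ideal_span_singleton_smul, sup_comm]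

theorem exists_eq_sum_smul_of_mem_mixedSubmodule {m : M} (hm : m ∈ mixedSubmodule M x F ∅ Q) :
    ∃ h : ι → M, m = ∑ q ∈ Q, F q • h q := by
  classical
  induction Q using Finset.induction_on generalizing m with
  | empty => simpa [mixedSubmodule_empty] using hm
  | insert q Q hq ih =>
    rw [mixedSubmodule_insert_right, mem_sup_smul_top_iff] at hm
    obtain ⟨m', hm'⟩ := hm
    obtain ⟨g, hg⟩ := ih hm'
    refine ⟨Function.update g q m', ?_⟩
    rw [Finset.sum_insert hq, Function.update_self, sub_eq_iff_eq_add'.1 hg]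
    congr 1
    refine Finset.sum_congr rfl fun i hi => ?_
    rw [Function.update_of_ne (ne_of_mem_of_not_mem hi hq)]

/-- The conditions under which each `x c` may be replaced by `F c` in the regular sequence `x`
on `M`. -/
structure IsExchangeable (M : Type*) [AddCommGroup M] [Module A M] [DecidableEq ι]
    (x F : ι → A) : Prop where
  separated : ∀ (P Q : Finset ι) (c : ι) (m : M),
    (∀ k : ℕ, ∃ n, m - x c ^ k • n ∈ mixedSubmodule M x F P Q) → m ∈ mixedSubmodule M x F P Q
  mem_of_smul_mem : ∀ (P : Finset ι) (c : ι), c ∉ P →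
    ∀ m, x c • m ∈ mixedSubmodule M x F P ∅ → m ∈ mixedSubmodule M x F P ∅
  exists_pow_mem : ∀ (P Q : Finset ι) (c : ι), (∀ i, i ∈ insert c (P ∪ Q)) →
    ∃ k : ℕ, x c ^ k ∈ Ideal.span (x '' P ∪ F '' Q) ⊔ Ideal.span {F c}

namespace IsExchangeable

variable [DecidableEq ι]

-- Enlarging `P` until `P ∪ Q ∪ {c}` is everything reduces to the case where `x c` is nilpotent
-- modulo the other elements.
theorem isSMulRegular_right_of_left [Finite ι] (hxF : IsExchangeable M x F)
    (hx : ∀ (P : Finset ι) (c : ι), Disjoint P Q → c ∉ P ∪ Q →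
      IsSMulRegular (M ⧸ mixedSubmodule M x F P Q) (x c))
    (hPQ : Disjoint P Q) (hc : c ∉ P ∪ Q) : IsSMulRegular (M ⧸ mixedSubmodule M x F P Q) (F c) := by
  have := Fintype.ofFinite ι
  induction hk : Pᶜ.card using Nat.strong_induction_on generalizing P with
  | _ k ih =>
  by_cases hall : ∀ i, i ∈ insert c (P ∪ Q)
  · obtain ⟨k, hk⟩ := hxF.exists_pow_mem P Q c hall
    exact isSMulRegular_quotient_of_pow_mem (hx P c hPQ hc) hk
  · push Not at hall
    obtain ⟨r, hr⟩ := hall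
    simp only [Finset.mem_insert, Finset.mem_union, not_or] at hr hc
    refine isSMulRegular_quotient_of_forall_pow (hxF.separated P Q r)
      (hx P r hPQ (by simp [hr])) ?_
    rw [← mixedSubmodule_insert_left]
    refine ih _ ?_ (by simp [hPQ, hr]) (by simp [hc, Ne.symm hr.1]) rfl
    rw [← hk, Finset.compl_insert]
    exact Finset.card_erase_lt_of_mem (by simp [hr])

theorem isSMulRegular [Finite ι] (hxF : IsExchangeable M x F) (hPQ : Disjoint P Q)
    (hc : c ∉ P ∪ Q) :
    IsSMulRegular (M ⧸ mixedSubmodule M x F P Q) (x c) ∧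
      IsSMulRegular (M ⧸ mixedSubmodule M x F P Q) (F c) := by
  suffices hx : ∀ (P : Finset ι) (c : ι), Disjoint P Q → c ∉ P ∪ Q →
      IsSMulRegular (M ⧸ mixedSubmodule M x F P Q) (x c) from
    ⟨hx P c hPQ hc, hxF.isSMulRegular_right_of_left hx hPQ hc⟩
  clear hPQ hc
  induction Q using Finset.induction_on with
  | empty =>
    exact fun P c _ hc => (isSMulRegular_quotient_iff_mem_of_smul_mem _ _).2
      (hxF.mem_of_smul_mem P c (by simpa using hc))
  | insert q Q hq ih =>
    intro P c hPQ hc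
    rw [Finset.disjoint_insert_right] at hPQ
    simp only [Finset.mem_union, Finset.mem_insert, not_or] at hc
    rw [mixedSubmodule_insert_right]
    refine isSMulRegular_quotient_sup_smul (ih P c hPQ.2 (by simp [hc])) ?_
    rw [← mixedSubmodule_insert_left]
    exact hxF.isSMulRegular_right_of_left ih (by simp [hPQ, hc]) (by simp [hPQ, hq, Ne.symm hc.2.1])

end IsExchangeable

end MixedRegularity

section Koszul

variable {A M ι : Type*} [CommRing A] [AddCommGroup M] [Module A M]

variable (M) in
/-- Exactness in degree one of the Koszul complex of `F` on `M`: every relation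
`∑ i, F i • g i = 0` is a combination of the trivial relations `F i • F j = F j • F i`. -/
def IsKoszulExact [Fintype ι] (F : ι → A) : Prop :=
  ∀ g : ι → M, ∑ i, F i • g i = 0 →
    ∃ k : ι → ι → M, (∀ i j, k i j = -k j i) ∧ ∀ i, g i = ∑ j, F j • k i j

theorem sum_smul_sum_smul_eq_zero [Fintype ι] [IsAddTorsionFree M] (F : ι → A) {k : ι → ι → M}
    (hk : ∀ i j, k i j = -k j i) : ∑ i, F i • ∑ j, F j • k i j = 0 := by
  rw [← self_eq_neg]
  conv_lhs => simp only [Finset.smul_sum]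
  rw [Finset.sum_comm]
  simp only [Finset.smul_sum, ← Finset.sum_neg_distrib]
  refine Finset.sum_congr rfl fun j _ => Finset.sum_congr rfl fun i _ => ?_
  rw [hk i j, smul_neg, smul_neg, smul_comm]

theorem exists_antisymm_of_sum_smul_eq_zero {x F : ι → A}
    (hF : ∀ (Q : Finset ι) (c : ι), c ∉ Q → IsSMulRegular (M ⧸ mixedSubmodule M x F ∅ Q) (F c))
    {Q : Finset ι} {g : ι → M} (hg : ∑ i ∈ Q, F i • g i = 0) :
    ∃ k : ι → ι → M, (∀ i j, k i j = -k j i) ∧ ∀ i ∈ Q, g i = ∑ j ∈ Q, F j • k i j := by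
  classical
  induction Q using Finset.induction_on generalizing g with
  | empty => exact ⟨fun _ _ => 0, by simp, by simp⟩
  | insert q Q hq ih =>
    rw [Finset.sum_insert hq] at hg
    have hgq : g q ∈ mixedSubmodule M x F ∅ Q := by
      refine mem_of_isSMulRegular_quotient_of_smul_mem (hF Q q hq) ?_
      rw [eq_neg_of_add_eq_zero_left hg]
      exact neg_mem (sum_mem fun i hi => smul_mem_mixedSubmodule_right hi _)
    obtain ⟨h, hh⟩ := exists_eq_sum_smul_of_mem_mixedSubmodule hgq
    obtain ⟨k, hk, hgk⟩ := ih (g := fun i => g i + F q • h i) (by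
      rw [← hg, hh, Finset.smul_sum, ← Finset.sum_add_distrib]
      exact Finset.sum_congr rfl fun i _ => by rw [smul_add, smul_comm, add_comm])
    have hne : ∀ i ∈ Q, i ≠ q := fun i hi => ne_of_mem_of_not_mem hi hq
    refine ⟨fun i j => if i = q then (if j = q then 0 else h j) else
      (if j = q then -h i else k i j), fun i j => ?_, fun i hi => ?_⟩
    · dsimp only
      split_ifs <;> simp [← hk]
    · rw [Finset.sum_insert hq]
      obtain rfl | hi := Finset.mem_insert.1 hi
      · simp only [if_true, smul_zero, zero_add]
        rw [hh]
        exact Finset.sum_congr rfl fun j hj => by rw [if_neg (hne j hj)]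
      · simp only [if_neg (hne i hi), if_true]
        rw [smul_neg, eq_neg_add_iff_add_eq, add_comm, hgk i hi]
        exact Finset.sum_congr rfl fun j hj => by rw [if_neg (hne j hj)]

theorem IsExchangeable.isKoszulExact [Fintype ι] [DecidableEq ι] {x F : ι → A}
    (hxF : IsExchangeable M x F) : IsKoszulExact M F := fun _ hg => by
  simpa using exists_antisymm_of_sum_smul_eq_zero (x := x)
    (fun Q c hc => (hxF.isSMulRegular (Finset.disjoint_empty_left Q) (by simpa using hc)).2) hg

theorem sum_mulVec_smul [Fintype ι] (B : Matrix ι ι A) (v : ι → A) (g : ι → M) :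
    ∑ j, B.mulVec v j • g j = ∑ k, v k • ∑ j, B j k • g j := by
  simp only [Matrix.mulVec, dotProduct, Finset.sum_smul, Finset.smul_sum, smul_smul, mul_comm (v _)]
  exact Finset.sum_comm

theorem IsKoszulExact.of_mulVec [Fintype ι] [DecidableEq ι] {G : ι → A}
    {B R : Matrix ι ι A} (hBR : B * R = 1) (hRG : IsKoszulExact M (R.mulVec G)) :
    IsKoszulExact M G := by
  intro g hg
  have hBF : B.mulVec (R.mulVec G) = G := by rw [Matrix.mulVec_mulVec, hBR, Matrix.one_mulVec]
  obtain ⟨κ, hκ, hh⟩ := hRG (fun k => ∑ j, B j k • g j) <| by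
    rw [← sum_mulVec_smul, hBF, hg]
  refine ⟨fun j i => ∑ k, ∑ l, (R k j * R l i) • κ k l, fun j i => ?_, fun j => ?_⟩
  · dsimp only
    rw [Finset.sum_comm]
    simp only [← Finset.sum_neg_distrib, ← smul_neg, ← hκ, mul_comm]
  · calc g j = ∑ i, (B * R) i j • g i := by simp [hBR, Matrix.one_apply]
      _ = ∑ k, R k j • ∑ i, B i k • g i :=
          sum_mulVec_smul B (fun k => R k j) g
      _ = ∑ k, R k j • ∑ i, G i • ∑ l, R l i • κ k l := by
          simp only [hh, sum_mulVec_smul]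
      _ = ∑ i, G i • ∑ k, ∑ l, (R k j * R l i) • κ k l := by
          simp only [Finset.smul_sum]
          rw [Finset.sum_comm]
          simp only [smul_smul, mul_left_comm]

end Koszul

section Graded

variable {K E E' : Type*} [Field K] [AddCommGroup E] [Module K E] [AddCommGroup E'] [Module K E']

/- The ranks on `V` of `φ` and `ψ` modulo `U` agree, since these maps have the same kernel. -/
theorem le_map_sup_of_le_map_sup {V : Submodule K E} {V' U : Submodule K E'} [FiniteDimensional K V]
    {φ ψ : E →ₗ[K] E'} (hker : ∀ v ∈ V, φ v ∈ U ↔ ψ v ∈ U) (hψ : V.map ψ ≤ V')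
    (hφ : V' ≤ V.map φ ⊔ U) : V' ≤ V.map ψ ⊔ U := by
  have hker' : LinearMap.ker ((U.mkQ ∘ₗ φ).domRestrict V) =
      LinearMap.ker ((U.mkQ ∘ₗ ψ).domRestrict V) := by
    ext v
    simpa using hker v v.2
  have hrank : Module.finrank K ((V.map φ).map U.mkQ) = Module.finrank K ((V.map ψ).map U.mkQ) := by
    have h₁ := ((U.mkQ ∘ₗ φ).domRestrict V).finrank_range_add_finrank_ker
    have h₂ := ((U.mkQ ∘ₗ ψ).domRestrict V).finrank_range_add_finrank_ker
    rw [hker', LinearMap.range_domRestrict, Submodule.map_comp] at h₁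
    rw [LinearMap.range_domRestrict, Submodule.map_comp] at h₂
    lia
  have hle : V'.map U.mkQ ≤ (V.map φ).map U.mkQ := by
    simpa using Submodule.map_mono (f := U.mkQ) hφ
  have heq := Submodule.eq_of_le_of_finrank_le ((Submodule.map_mono hψ).trans hle) hrank.le
  rw [sup_comm, ← Submodule.comap_map_mkQ, heq]
  exact (Submodule.map_le_iff_le_comap.1 hle)

variable {R A M ι Γ : Type*} [CommRing R] [CommRing A] [AddCommGroup M] [Module A M] [Module R M]
  [AddCommGroup Γ]

/-- Multiplication by `r` has degree `δ` for the grading of `M` whose projection onto the piece of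
degree `α` is `π α`. -/
def SMulHasDegree (π : Γ → Module.End R M) (r : A) (δ : Γ) : Prop :=
  ∀ α m, π α (r • m) = r • π (α - δ) m

variable {π : Γ → Module.End R M} {δ : Γ} {x F : ι → A}

theorem SMulHasDegree.pow {r : A} (hr : SMulHasDegree π r δ) (k : ℕ) :
    SMulHasDegree π (r ^ k) (k • δ) := by
  induction k with
  | zero => simp [SMulHasDegree]
  | succ k ih =>
    intro α m
    rw [pow_succ', mul_smul, hr, ih, succ_nsmul', sub_sub, mul_smul]

theorem apply_mem_mixedSubmodule (hx : ∀ i, SMulHasDegree π (x i) δ)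
    (hF : ∀ i, SMulHasDegree π (F i) δ) {P Q : Finset ι} {m : M} (hm : m ∈ mixedSubmodule M x F P Q)
    (α : Γ) : π α m ∈ mixedSubmodule M x F P Q := by
  refine Submodule.smul_induction_on hm (fun r hr n _ => ?_) fun m m' hm hm' => ?_
  · induction hr using Submodule.span_induction generalizing n with
    | mem r hr =>
      obtain ⟨i, hi, rfl⟩ | ⟨i, hi, rfl⟩ := hr
      · rw [hx i]
        exact smul_mem_mixedSubmodule_left hi _
      · rw [hF i]
        exact smul_mem_mixedSubmodule_right hi _
    | zero => simp
    | add r s _ _ hr hs =>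
      rw [add_smul, map_add]
      exact add_mem (hr n trivial) (hs n trivial)
    | smul a r _ hr =>
      rw [smul_eq_mul, mul_comm, mul_smul]
      exact hr (a • n) trivial
  · rw [map_add]
    exact add_mem hm hm'

theorem mem_mixedSubmodule_of_forall_pow [LinearOrder Γ] [IsOrderedAddMonoid Γ] [Archimedean Γ]
    (hsum : ∀ m, ∃ s : Finset Γ, m = ∑ α ∈ s, π α m) (hneg : ∀ α < 0, π α = 0) (hδ : 0 < δ)
    (hx : ∀ i, SMulHasDegree π (x i) δ) (hF : ∀ i, SMulHasDegree π (F i) δ) {P Q : Finset ι} {c : ι}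
    {m : M} (hm : ∀ k : ℕ, ∃ n, m - x c ^ k • n ∈ mixedSubmodule M x F P Q) :
    m ∈ mixedSubmodule M x F P Q := by
  obtain ⟨s, hs⟩ := hsum m
  rw [hs]
  refine sum_mem fun α _ => ?_
  obtain ⟨k, hk⟩ := Archimedean.arch α hδ
  obtain ⟨n, hn⟩ := hm (k + 1)
  have hα : α - (k + 1) • δ < 0 := by
    rw [sub_neg, succ_nsmul]
    exact hk.trans_lt (lt_add_of_pos_right _ hδ)
  simpa [(hx c).pow (k + 1) α n, hneg _ hα] using apply_mem_mixedSubmodule hx hF hn α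

theorem IsKoszulExact.exists_antisymm_of_degree [Fintype ι] (hFK : IsKoszulExact M F)
    (hF : ∀ i, SMulHasDegree π (F i) δ) {α : Γ} {g : ι → M} (hgα : ∀ i, π α (g i) = g i)
    (hg : ∑ i, F i • g i = 0) :
    ∃ k : ι → ι → M, (∀ i j, k i j = -k j i) ∧ ∀ i, g i = ∑ j, F j • π (α - δ) (k i j) := by
  obtain ⟨k, hk, hgk⟩ := hFK g hg
  refine ⟨k, hk, fun i => ?_⟩
  rw [← hgα i, hgk i, map_sum]
  exact Finset.sum_congr rfl fun j _ => hF j α _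

variable [Algebra K A] [Module K M] [IsScalarTower K A M] {π : Γ → Module.End K M}

/- Multiplication by `x c` and by `F c` are both injective modulo the mixed submodule, so replacing
`F c` by `x c` does not change the dimension of the piece of degree `α` of the quotient. -/
theorem IsExchangeable.range_le_mixedSubmodule [Fintype ι] [DecidableEq ι]
    (h : IsExchangeable M x F) (hπ : ∀ α m, π α (π α m) = π α m)
    [∀ α, FiniteDimensional K (LinearMap.range (π α))] (hx : ∀ i, SMulHasDegree π (x i) δ)
    (hF : ∀ i, SMulHasDegree π (F i) δ) {α : Γ}
    (hα : LinearMap.range (π α) ≤ (mixedSubmodule M x F ∅ Finset.univ).restrictScalars K)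
    (P : Finset ι) :
    LinearMap.range (π α) ≤ (mixedSubmodule M x F P Pᶜ).restrictScalars K := by
  induction P using Finset.induction_on with
  | empty => simpa using hα
  | insert c P hc ih =>
    set Q := (insert c P)ᶜ with hQ
    have hPQ : Disjoint P Q := by
      rw [Finset.disjoint_left]
      intro k hk
      simp [hQ, hk]
    have hcPQ : c ∉ P ∪ Q := by simp [hQ, hc]
    have hPc : Pᶜ = insert c Q := by
      ext k
      by_cases hk : k = c <;> simp [hQ, hk, hc]
    obtain ⟨hxc, hFc⟩ := h.isSMulRegular hPQ hcPQ
    have hmem : ∀ r : A, IsSMulRegular (M ⧸ mixedSubmodule M x F P Q) r → ∀ m : M,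
        r • m ∈ mixedSubmodule M x F P Q ↔ m ∈ mixedSubmodule M x F P Q := fun r hr m =>
      ⟨fun hm => (isSMulRegular_quotient_iff_mem_of_smul_mem _ _).1 hr m hm,
        Submodule.smul_mem _ r⟩
    have key := le_map_sup_of_le_map_sup (V := LinearMap.range (π (α - δ)))
      (V' := LinearMap.range (π α)) (U := (mixedSubmodule M x F P Q).restrictScalars K)
      (φ := Algebra.lsmul K K M (F c)) (ψ := Algebra.lsmul K K M (x c)) ?_ ?_ ?_
    · refine key.trans (sup_le ?_ ?_)
      · rintro _ ⟨m, -, rfl⟩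
        exact smul_mem_mixedSubmodule_left (Finset.mem_insert_self c P) m
      · rw [mixedSubmodule_insert_left]
        exact le_sup_left (a := mixedSubmodule M x F P Q)
    · exact fun m _ => (hmem _ hFc m).trans (hmem _ hxc m).symm
    · rintro _ ⟨_, ⟨m, rfl⟩, rfl⟩
      exact ⟨x c • m, hx c α m⟩
    · rintro _ ⟨m, rfl⟩
      have hm := ih ⟨π α m, hπ α m⟩
      rw [hPc, mixedSubmodule_insert_right] at hm
      obtain ⟨n, hn⟩ := mem_sup_smul_top_iff.1 hm
      have hn' := apply_mem_mixedSubmodule hx hF hn α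
      rw [map_sub, hπ, hF c α n] at hn'
      exact Submodule.mem_sup.2 ⟨_, ⟨_, ⟨n, rfl⟩, rfl⟩, _, hn', by simp⟩

end Graded

section Truncate

open Pointwise

variable {σ R : Type*} [CommSemiring R] {s t u : Set (σ →₀ ℕ)} {p q : MvPolynomial σ R}

open Classical in
/-- The part of a polynomial consisting of its monomials with exponent in `s`. -/
noncomputable def truncate (s : Set (σ →₀ ℕ)) : MvPolynomial σ R →ₗ[R] MvPolynomial σ R where
  toFun p := .ofCoeff ((AddMonoidAlgebra.coeff p).filter (· ∈ s))
  map_add' p q := AddMonoidAlgebra.ext (by simp [Finsupp.filter_add])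
  map_smul' r p := AddMonoidAlgebra.ext (by simp [Finsupp.filter_smul])

open Classical in
theorem coeff_truncate (s : Set (σ →₀ ℕ)) (p : MvPolynomial σ R) (a : σ →₀ ℕ) :
    coeff a (truncate s p) = if a ∈ s then coeff a p else 0 :=
  Finsupp.filter_apply _ _ _

theorem mem_support_truncate {a : σ →₀ ℕ} : a ∈ (truncate s p).support ↔ a ∈ p.support ∧ a ∈ s := by
  classical
  simp only [mem_support_iff, coeff_truncate]
  split_ifs with h <;> simp [h]

theorem truncate_eq_self (h : p ∈ restrictSupport R s) : truncate s p = p := by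
  classical
  ext a
  rw [coeff_truncate]
  split_ifs with ha
  · rfl
  · exact (notMem_support_iff.1 fun h' => ha (h h')).symm

theorem truncate_eq_zero (h : ∀ a ∈ p.support, a ∉ s) : truncate s p = 0 := by
  classical
  ext a
  rw [coeff_truncate]
  split_ifs with ha
  · exact notMem_support_iff.1 fun h' => h a h' ha
  · rfl

theorem truncate_mem (h : ∀ a ∈ p.support, a ∈ s → a ∈ t) : truncate s p ∈ restrictSupport R t :=
  (mem_restrictSupport_iff R).2 fun _ ha =>
    h _ (mem_support_truncate.1 ha).1 (mem_support_truncate.1 ha).2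

theorem truncate_mul
    (h : ∀ m ∈ p.support, ∀ a ∈ q.support, m + a ∈ s ↔ m ∈ t ∧ a ∈ u) :
    truncate s (p * q) = truncate t p * truncate u q := by
  classical
  ext e
  rw [coeff_truncate, coeff_mul, coeff_mul,
    show (if e ∈ s then _ else 0) = ∑ x ∈ Finset.HasAntidiagonal.antidiagonal e,
      if e ∈ s then coeff x.1 p * coeff x.2 q else 0 by split_ifs <;> simp]
  refine Finset.sum_congr rfl fun ⟨m, a⟩ hma => ?_
  obtain rfl := Finset.HasAntidiagonal.mem_antidiagonal.1 hma
  simp only [coeff_truncate]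
  by_cases hm : m ∈ p.support
  · by_cases ha : a ∈ q.support
    · simp only [h m hm a ha]
      split_ifs <;> simp_all
    · simp [notMem_support_iff.1 ha]
  · simp [notMem_support_iff.1 hm]

theorem mul_mem_restrictSupport (hst : s + t ⊆ u) (hp : p ∈ restrictSupport R s)
    (hq : q ∈ restrictSupport R t) : p * q ∈ restrictSupport R u := by
  refine restrictSupport_mono R hst ?_
  rw [restrictSupport_add]
  exact Submodule.mul_mem_mul hp hq

end Truncate

section SupportSubalgebra

open Pointwise

variable {σ R : Type*} [CommRing R]

variable (R) in
/-- The semigroup algebra of `C`, as an algebra of polynomials. -/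
noncomputable def supportSubalgebra (C : AddSubmonoid (σ →₀ ℕ)) :
    Subalgebra R (MvPolynomial σ R) :=
  (restrictSupport R (C : Set (σ →₀ ℕ))).toSubalgebra
    ((monomial_mem_restrictSupport R).2 (Or.inl C.zero_mem))
    fun _ _ => mul_mem_restrictSupport (Set.add_subset_iff.2 fun _ ha _ hb => C.add_mem ha hb)

variable {C : AddSubmonoid (σ →₀ ℕ)}

variable (R) in
/-- The monomials with exponent in `C`. -/
noncomputable def supportSubalgebra.monomial : Multiplicative C →* supportSubalgebra R C where
  toFun a := ⟨MvPolynomial.monomial (a.toAdd : σ →₀ ℕ) 1,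
    (monomial_mem_restrictSupport R).2 (Or.inl a.toAdd.2)⟩
  map_one' := rfl
  map_mul' a b := Subtype.ext (by simp)

theorem supportSubalgebra.span_range_monomial :
    Submodule.span R (Set.range (supportSubalgebra.monomial R (C := C))) = ⊤ := by
  refine Submodule.map_injective_of_injective
    (f := (supportSubalgebra R C).val.toLinearMap) Subtype.val_injective ?_
  rw [Submodule.map_span, ← Set.range_comp, Submodule.map_top]
  refine Eq.trans ?_ ((restrictSupport_eq_span R _).symm.trans (Submodule.range_subtype _).symm)
  rw [Set.image_eq_range]
  rfl

instance [AddMonoid.FG C] : Algebra.FiniteType R (supportSubalgebra R C) := by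
  refine .of_surjective (AddMonoidAlgebra.lift R _ C (supportSubalgebra.monomial R))
    ((AddMonoidAlgebra.lift R _ C _).toLinearMap.range_eq_top.1 (top_le_iff.1 ?_))
  rw [← supportSubalgebra.span_range_monomial, Submodule.span_le]
  rintro _ ⟨a, rfl⟩
  exact ⟨.single a.toAdd 1, by simp⟩

/-- The polynomials with support in `S`, as a module over the semigroup algebra of `C`. -/
noncomputable def supportModule (S : Set (σ →₀ ℕ)) (h : (C : Set (σ →₀ ℕ)) + S ⊆ S) :
    Submodule (supportSubalgebra R C) (MvPolynomial σ R) where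
  __ := restrictSupport R S
  smul_mem' r _ hp := mul_mem_restrictSupport h r.2 hp

variable {S : Set (σ →₀ ℕ)} {h : (C : Set (σ →₀ ℕ)) + S ⊆ S} {Γ : Type*} [AddCommGroup Γ]

namespace supportModule

/- Shortcuts for instances found otherwise only by an expensive search. -/
noncomputable instance : AddCommGroup (supportModule (R := R) S h) :=
  Submodule.addCommGroup _

noncomputable instance : Module (supportSubalgebra R C) (supportModule (R := R) S h) :=
  Submodule.module _

noncomputable instance : SMul (supportSubalgebra R C) (supportModule (R := R) S h) :=
  Module.toDistribMulAction.toSMul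

/-- The part of weight `α` for the grading of `supportModule S h` in which the monomial with
exponent `a` has weight `w a`. -/
noncomputable def component (w : (σ →₀ ℕ) →+ Γ) (α : Γ) :
    Module.End R (supportModule (R := R) S h) where
  toFun m := ⟨truncate {a | w a = α} m.1, truncate_mem fun _ ha _ => m.2 ha⟩
  map_add' _ _ := Subtype.ext (map_add _ _ _)
  map_smul' _ _ := Subtype.ext (map_smul _ _ _)

variable {w : (σ →₀ ℕ) →+ Γ} {α δ : Γ}

theorem component_of_forall {m : supportModule (R := R) S h} (hm : ∀ a ∈ m.1.support, w a = α) :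
    component w α m = m :=
  Subtype.ext (truncate_eq_self hm)

theorem component_component (m : supportModule (R := R) S h) :
    component w α (component w α m) = component w α m :=
  component_of_forall fun _ ha => (mem_support_truncate.1 ha).2

theorem component_eq_zero (hα : ∀ a ∈ S, w a ≠ α) :
    component w α = (0 : Module.End R (supportModule (R := R) S h)) :=
  LinearMap.ext fun m => Subtype.ext (truncate_eq_zero fun a ha => hα a (m.2 ha))

theorem sMulHasDegree_component {r : supportSubalgebra R C} (hr : ∀ a ∈ r.1.support, w a = δ) :
    SMulHasDegree (M := supportModule (R := R) S h) (component w) r δ := fun α m => by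
  have hmul := truncate_mul (p := r.1) (q := m.1) (s := {a | w a = α}) (t := Set.univ)
    (u := {a | w a = α - δ}) fun a ha a' _ => by simp [hr a ha, eq_sub_iff_add_eq']
  rw [truncate_eq_self fun _ _ => Set.mem_univ _] at hmul
  exact Subtype.ext hmul

theorem exists_eq_sum_component (w : (σ →₀ ℕ) →+ Γ) (m : supportModule (R := R) S h) :
    ∃ s : Finset Γ, m = ∑ α ∈ s, component w α m := by
  classical
  refine ⟨m.1.support.image w, Subtype.ext (MvPolynomial.ext _ _ fun a => ?_)⟩
  rw [AddSubmonoidClass.coe_finsetSum, coeff_sum]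
  change _ = ∑ α ∈ _, coeff a (truncate {a | w a = α} m.1)
  simp only [coeff_truncate, Set.mem_ofPred_eq, Finset.sum_ite_eq, Finset.mem_image]
  split_ifs with ha
  · rfl
  · exact notMem_support_iff.1 fun h => ha ⟨a, h, rfl⟩

theorem finite_range_component [IsNoetherianRing R] (hα : {a ∈ S | w a = α}.Finite) :
    Module.Finite R (LinearMap.range (component (R := R) (S := S) (h := h) w α)) := by
  have := hα.to_subtype
  have := Module.Finite.of_basis (basisRestrictSupport R {a ∈ S | w a = α})
  refine Module.Finite.of_injective (((supportModule S h).subtype.restrictScalars R).restrict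
    (q := restrictSupport R {a ∈ S | w a = α}) ?_) ?_
  · rintro _ ⟨m, rfl⟩ a ha
    exact (mem_support_truncate.1 ha).imp_left (m.2 ·)
  · exact fun m m' hmm' => Subtype.ext (Subtype.ext (Subtype.ext_iff.1 hmm' :))

instance : IsScalarTower R (supportSubalgebra R C) (supportModule (R := R) S h) :=
  ⟨fun r a m => Subtype.ext (smul_assoc r a m.1)⟩

end supportModule

end SupportSubalgebra

section Characters

theorem exists_addMonoidHom_extension {C Z D : Type*} [AddCommMonoid C] [AddCommGroup Z]
    [AddCommGroup D] [DivisibleBy D ℤ] (i : C →+ Z) (hi : Function.Injective i) (φ : C →+ D) :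
    ∃ ψ : Z →+ D, ψ.comp i = φ := by
  have hinj : Function.Injective (Algebra.GrothendieckAddGroup.lift i) := by
    rw [injective_iff_map_eq_zero]
    intro g hg
    have hsec := (AddLocalization.addMonoidOf (⊤ : AddSubmonoid C)).sec_spec g
    rw [Algebra.GrothendieckAddGroup.lift_apply, sub_eq_zero] at hg
    rw [hi hg] at hsec
    exact add_eq_right.1 hsec
  obtain ⟨ψ, hψ⟩ := (Module.Baer.of_divisible D).extension_property_addMonoidHom
    _ hinj (Algebra.GrothendieckAddGroup.lift φ)
  refine ⟨ψ, ?_⟩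
  rw [← Algebra.GrothendieckAddGroup.lift.symm_apply_apply i,
    ← Algebra.GrothendieckAddGroup.lift.symm_apply_apply φ, ← hψ]
  rfl

theorem exists_algHom_of_forall_pow_notMem {K A : Type*} [Field K] [IsAlgClosed K] [CommRing A]
    [Algebra K A] [Algebra.FiniteType K A] {J : Ideal A} {a : A} (ha : ∀ k : ℕ, a ^ k ∉ J) :
    ∃ χ : A →ₐ[K] K, (∀ b ∈ J, χ b = 0) ∧ χ a ≠ 0 := by
  have hA : IsJacobsonRing A := isJacobsonRing_of_finiteType (A := K)
  have haJ : a ∉ J.radical := fun ⟨k, hk⟩ => ha k hk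
  rw [← hA.out J.radical_isRadical, Ideal.jacobson, Submodule.mem_sInf] at haJ
  push Not at haJ
  obtain ⟨I, ⟨hJI, hI⟩, haI⟩ := haJ
  let : Field (A ⧸ I) := Ideal.Quotient.field I
  have : Module.Finite K (A ⧸ I) := finite_of_finite_type_of_isJacobsonRing K (A ⧸ I)
  let e : K ≃ₐ[K] A ⧸ I := AlgEquiv.ofBijective (Algebra.ofId K (A ⧸ I))
    IsAlgClosed.algebraMap_bijective_of_isIntegral
  have ker b : e.symm (Ideal.Quotient.mkₐ K I b) = 0 ↔ b ∈ I := by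
    rw [map_eq_zero_iff _ e.symm.injective]
    exact Ideal.Quotient.eq_zero_iff_mem
  exact ⟨(e.symm : (A ⧸ I) →ₐ[K] K).comp (Ideal.Quotient.mkₐ K I),
    fun b hb => (ker b).2 (hJI (J.le_radical hb)), fun h => haI ((ker a).1 h)⟩

theorem exists_addMonoidHom_units_extension {C Z K : Type*} [AddCommMonoid C] [AddCommGroup Z]
    [Field K] [IsAlgClosed K] (i : C →+ Z) (hi : Function.Injective i) (φ : C →+ Additive Kˣ) :
    ∃ ψ : Z →+ Additive Kˣ, ψ.comp i = φ := by
  have : DivisibleBy (Additive Kˣ) ℕ := by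
    refine divisibleByOfSMulRightSurj _ _ fun {k} hk a => ?_
    obtain ⟨z, hz⟩ := IsAlgClosed.exists_pow_nat_eq (a.toMul : K) (Nat.pos_of_ne_zero hk)
    have hz0 : z ≠ 0 := by
      rintro rfl
      exact a.toMul.ne_zero (by rw [← hz, zero_pow hk])
    exact ⟨.ofMul (Units.mk0 z hz0), Additive.toMul.injective (Units.ext (by simpa using hz))⟩
  have : DivisibleBy (Additive Kˣ) ℤ := AddGroup.divisibleByIntOfDivisibleByNat _
  exact exists_addMonoidHom_extension i hi φ

theorem exists_torus_point {σ K : Type*} [Field K] [IsAlgClosed K] {C : AddSubmonoid (σ →₀ ℕ)}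
    (χ : supportSubalgebra K C →ₐ[K] K) :
    ∃ x : σ → K, (∀ i, x i ≠ 0) ∧ ∀ g : supportSubalgebra K C, χ g = eval x
      (truncate {a | ∃ h : a ∈ C, χ (supportSubalgebra.monomial K (.ofAdd ⟨a, h⟩)) ≠ 0} g.1) := by
  classical
  let μ : Multiplicative C →* K := χ.toMonoidHom.comp (supportSubalgebra.monomial K)
  let U : AddSubmonoid C :=
    { carrier := {a | μ (.ofAdd a) ≠ 0}
      zero_mem' := by simp
      add_mem' ha hb := by simp_all }
  let φ : U →+ Additive Kˣ :=
    { toFun a := .ofMul (Units.mk0 (μ (.ofAdd a)) a.2)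
      map_zero' := Additive.toMul.injective (Units.ext (map_one μ))
      map_add' a b := Additive.toMul.injective (Units.ext (map_mul μ _ _)) }
  let i : U →+ σ →₀ ℤ :=
    (Finsupp.mapRange.addMonoidHom (Nat.castAddMonoidHom ℤ)).comp (C.subtype.comp U.subtype)
  have hi : Function.Injective i :=
    (Finsupp.mapRange_injective _ Nat.cast_zero Nat.cast_injective).comp
      (Subtype.val_injective.comp Subtype.val_injective)
  obtain ⟨ψ, hψ⟩ := exists_addMonoidHom_units_extension i hi φ
  let x j : K := ((ψ (Finsupp.single j 1)).toMul : Kˣ)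
  refine ⟨x, fun j => Units.ne_zero _, fun g => ?_⟩
  have hx (a : U) : eval x (MvPolynomial.monomial (a : σ →₀ ℕ) 1) = μ (.ofAdd a) := by
    have hi : i a = (a : σ →₀ ℕ).sum fun j k => k • Finsupp.single j 1 := by
      ext j
      simp [i, Finsupp.sum, Finsupp.finsetSum_apply, Finsupp.single_apply]
    have := congr_arg (fun z : Additive Kˣ => (z.toMul : K)) (DFunLike.congr_fun hψ a)
    simp only [AddMonoidHom.comp_apply, hi, Finsupp.sum, map_sum, map_nsmul, toMul_sum,
      toMul_nsmul, Units.coe_prod, Units.val_pow_eq_pow_val] at this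
    rwa [eval_monomial, one_mul]
  refine LinearMap.congr_fun (f := χ.toLinearMap) (g := (aeval x).toLinearMap ∘ₗ
    truncate _ ∘ₗ (supportSubalgebra K C).val.toLinearMap) ?_ g
  refine LinearMap.ext_on_range supportSubalgebra.span_range_monomial fun a => ?_
  change μ a = eval x (truncate _ (MvPolynomial.monomial (a.toAdd : σ →₀ ℕ) 1))
  by_cases ha : μ a = 0
  · rw [ha, truncate_eq_zero, map_zero]
    simpa [support_monomial] using show χ (supportSubalgebra.monomial K a) = 0 from ha
  · rw [truncate_eq_self, hx ⟨a.toAdd, ha⟩]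
    · rfl
    · exact (monomial_mem_restrictSupport K).2 (Or.inl ⟨a.toAdd.2, ha⟩)

end Characters

section SimplicialCone

variable {σ : Type*}

/-- `toR` as a homomorphism of monoids. -/
def toRHom : (σ →₀ ℕ) →+ (σ → ℝ) where
  toFun := toR
  map_zero' := by ext; simp [toR]
  map_add' _ _ := by ext; simp [toR]

/-- A simplicial cone of full dimension spanned by exponents, `vertex k` for `k : σ`; they are
indexed by `σ` itself because there are as many of them as coordinates. -/
structure SimplicialCone (σ : Type*) where
  vertex : σ → σ →₀ ℕ
  basis : Module.Basis σ ℝ (σ → ℝ)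
  basis_apply : ∀ k, basis k = toR (vertex k)

namespace SimplicialCone

variable [Fintype σ] (D : SimplicialCone σ)

/-- The coordinates of an exponent in the basis of vertices. -/
noncomputable def coord : (σ →₀ ℕ) →+ (σ → ℝ) :=
  (D.basis.equivFun : (σ → ℝ) →+ (σ → ℝ)).comp toRHom

/-- The linear function equal to `1` at the vertices. -/
noncomputable def height : (σ → ℝ) →ₗ[ℝ] ℝ :=
  ∑ k, D.basis.coord k

/-- The height of an exponent. -/
noncomputable def degree : (σ →₀ ℕ) →+ ℝ :=
  (D.height : (σ → ℝ) →+ ℝ).comp toRHom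

theorem coord_apply (a : σ →₀ ℕ) (k : σ) : D.coord a k = D.basis.repr (toR a) k := rfl

theorem coord_vertex [DecidableEq σ] (p : σ) : D.coord (D.vertex p) = Pi.single p 1 := by
  ext k
  rw [coord_apply, ← D.basis_apply, Module.Basis.repr_self, Finsupp.single_eq_pi_single]

theorem height_toR (a : σ →₀ ℕ) : D.height (toR a) = D.degree a := rfl

theorem degree_eq_sum (a : σ →₀ ℕ) : D.degree a = ∑ k, D.coord a k :=
  LinearMap.sum_apply _ _ _

theorem degree_vertex (p : σ) : D.degree (D.vertex p) = 1 := by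
  classical
  simp [degree_eq_sum, coord_vertex]

theorem coe_eq_sum_coord_mul (a : σ →₀ ℕ) (i : σ) :
    (a i : ℝ) = ∑ k, D.coord a k * D.vertex k i := by
  have h := congr_fun (D.basis.sum_repr (toR a)) i
  simpa [D.basis_apply, toR, coord_apply] using h.symm

theorem le_of_coord_le {a a' : σ →₀ ℕ} (h : D.coord a ≤ D.coord a') : a ≤ a' := fun i => by
  rw [← Nat.cast_le (α := ℝ), D.coe_eq_sum_coord_mul, D.coe_eq_sum_coord_mul]
  exact Finset.sum_le_sum fun k _ => mul_le_mul_of_nonneg_right (h k) (Nat.cast_nonneg _)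

theorem coord_injective : Function.Injective D.coord := fun _ _ h =>
  (D.le_of_coord_le h.le).antisymm (D.le_of_coord_le h.ge)

/-- The exponents in the cone. -/
noncomputable def cone : AddSubmonoid (σ →₀ ℕ) :=
  (AddSubmonoid.nonneg (σ → ℝ)).comap D.coord

theorem vertex_mem_cone (p : σ) : D.vertex p ∈ D.cone := by
  classical
  change 0 ≤ D.coord (D.vertex p)
  simp [coord_vertex]

theorem coord_le_degree {a : σ →₀ ℕ} (ha : a ∈ D.cone) (k : σ) : D.coord a k ≤ D.degree a := by
  rw [degree_eq_sum]
  exact Finset.single_le_sum (fun k _ => ha k) (Finset.mem_univ k)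

theorem degree_nonneg {a : σ →₀ ℕ} (ha : a ∈ D.cone) : 0 ≤ D.degree a := by
  rw [degree_eq_sum]
  exact Finset.sum_nonneg fun k _ => ha k

theorem finite_degree_le (r : ℝ) : {a | a ∈ D.cone ∧ D.degree a ≤ r}.Finite := by
  classical
  refine (Set.finite_Iic (Finsupp.equivFunOnFinite.symm
    fun i => ⌈∑ k, r * (D.vertex k i : ℝ)⌉₊)).subset fun a ⟨ha, har⟩ i => ?_
  have hai : (a i : ℝ) ≤ ∑ k, r * D.vertex k i := by
    rw [D.coe_eq_sum_coord_mul]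
    exact Finset.sum_le_sum fun k _ => mul_le_mul_of_nonneg_right
      ((D.coord_le_degree ha k).trans har) (Nat.cast_nonneg _)
  exact_mod_cast hai.trans (Nat.le_ceil _)

theorem sub_vertex_mem_cone {a : σ →₀ ℕ} {p : σ} (ha : a ∈ D.cone) (hp : 1 ≤ D.coord a p) :
    a - D.vertex p ∈ D.cone ∧ a - D.vertex p + D.vertex p = a := by
  classical
  have hle : D.coord (D.vertex p) ≤ D.coord a := by
    rw [coord_vertex, Pi.single, update_le_iff]
    exact ⟨hp, fun k _ => ha k⟩
  have hsub := tsub_add_cancel_of_le (D.le_of_coord_le hle)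
  refine ⟨?_, hsub⟩
  change 0 ≤ D.coord _
  rwa [← add_le_add_iff_right (D.coord (D.vertex p)), ← map_add, hsub, zero_add]

theorem induction_on_cone {motive : (σ →₀ ℕ) → Prop} {a : σ →₀ ℕ} (ha : a ∈ D.cone)
    (small : ∀ a ∈ D.cone, D.degree a ≤ Fintype.card σ → motive a)
    (add_vertex : ∀ a ∈ D.cone, ∀ p, motive a → motive (a + D.vertex p)) : motive a := by
  obtain ⟨N, hN⟩ := exists_nat_ge (D.degree a)
  induction N generalizing a with
  | zero => exact small a ha (hN.trans (by simp))
  | succ N ih =>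
    by_cases hex : ∃ p, 1 ≤ D.coord a p
    · obtain ⟨p, hp⟩ := hex
      obtain ⟨hmem, hsub⟩ := D.sub_vertex_mem_cone ha hp
      rw [← hsub] at hN ⊢
      refine add_vertex _ hmem p (ih hmem ?_)
      rw [map_add, degree_vertex] at hN
      push_cast at hN
      linarith
    · push Not at hex
      refine small a ha ?_
      rw [degree_eq_sum]
      simpa using Finset.sum_le_sum fun k (_ : k ∈ Finset.univ) => (hex k).le

theorem cone_fg : D.cone.FG := by
  refine (AddSubmonoid.fg_iff _).2 ⟨_, ?_, D.finite_degree_le (Fintype.card σ)⟩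
  refine (AddSubmonoid.closure_le.2 fun a ha => ha.1).antisymm fun a ha => ?_
  refine D.induction_on_cone ha (fun a ha hle => AddSubmonoid.subset_closure ⟨ha, hle⟩)
    fun a _ p ih => add_mem ih (AddSubmonoid.subset_closure ⟨D.vertex_mem_cone p, ?_⟩)
  rw [degree_vertex]
  exact_mod_cast Nat.succ_le_of_lt (Fintype.card_pos_iff.2 ⟨p⟩)

instance : AddMonoid.FG D.cone :=
  (AddMonoid.fg_iff_addSubmonoid_fg _).2 D.cone_fg

/-- The exponents in the cone from which the walls opposite to the vertices in `W` are removed. -/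
def halfOpen (W : Set σ) : Set (σ →₀ ℕ) :=
  {a | a ∈ D.cone ∧ ∀ k ∈ W, 0 < D.coord a k}

variable {W : Set σ}

open Pointwise in
theorem cone_add_halfOpen_subset : (D.cone : Set (σ →₀ ℕ)) + D.halfOpen W ⊆ D.halfOpen W := by
  rintro _ ⟨a, ha, a', ha', rfl⟩
  refine ⟨add_mem ha ha'.1, fun k hk => ?_⟩
  rw [map_add]
  exact add_pos_of_nonneg_of_pos (ha k) (ha'.2 k hk)

/-- The semigroup algebra of the cone. -/
noncomputable abbrev ring : Subalgebra ℂ (MvPolynomial σ ℂ) :=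
  supportSubalgebra ℂ D.cone

/-- The span of the monomials with exponent in the half-open cone. -/
noncomputable abbrev module (W : Set σ) : Submodule D.ring (MvPolynomial σ ℂ) :=
  supportModule (D.halfOpen W) D.cone_add_halfOpen_subset

/-- The monomials corresponding to the vertices. -/
noncomputable def vertexMonomial (k : σ) : D.ring :=
  supportSubalgebra.monomial ℂ (.ofAdd ⟨D.vertex k, D.vertex_mem_cone k⟩)

theorem vertexMonomial_smul (k : σ) (m : D.module W) :
    ((D.vertexMonomial k • m : D.module W) : MvPolynomial σ ℂ) =
      monomial (D.vertex k) 1 * m.1 := rfl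

theorem character_ne_zero_of_coord_le (χ : D.ring →ₐ[ℂ] ℂ) {a b : D.cone} {N : ℕ}
    (hab : D.coord a ≤ N • D.coord b)
    (hb : χ (supportSubalgebra.monomial ℂ (.ofAdd b)) ≠ 0) :
    χ (supportSubalgebra.monomial ℂ (.ofAdd a)) ≠ 0 := by
  obtain ⟨c, hc⟩ : ∃ c : D.cone, N • b = a + c := by
    have hsub : (a : σ →₀ ℕ) + (N • (b : σ →₀ ℕ) - a) = N • (b : σ →₀ ℕ) :=
      add_tsub_cancel_of_le (D.le_of_coord_le (by rwa [map_nsmul]))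
    refine ⟨⟨N • (b : σ →₀ ℕ) - a, ?_⟩, Subtype.ext hsub.symm⟩
    change 0 ≤ D.coord _
    rwa [← add_le_add_iff_left (D.coord a), ← map_add, hsub, map_nsmul, add_zero]
  have hpow := pow_ne_zero N hb
  rw [← map_pow, ← map_pow, ← ofAdd_nsmul, hc, ofAdd_add, map_mul, map_mul] at hpow
  exact left_ne_zero_of_mul hpow

theorem character_ne_zero_iff (χ : D.ring →ₐ[ℂ] ℂ) (a : D.cone) :
    χ (supportSubalgebra.monomial ℂ (.ofAdd a)) ≠ 0 ↔
      ∀ k, χ (D.vertexMonomial k) = 0 → D.coord a k = 0 := by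
  classical
  let β (k : σ) : D.cone := ⟨D.vertex k, D.vertex_mem_cone k⟩
  constructor
  · intro ha k hk
    by_contra hak
    have hak : 0 < D.coord a k := (a.2 k).lt_of_ne' hak
    obtain ⟨N, hN⟩ := Archimedean.arch 1 hak
    refine D.character_ne_zero_of_coord_le χ (a := β k) (N := N) ?_ ha hk
    rw [show D.coord (β k) = _ from D.coord_vertex k, Pi.single, update_le_iff]
    exact ⟨hN, fun k' _ => nsmul_nonneg (a.2 k') N⟩
  · intro h
    let b : D.cone := ∑ k with χ (D.vertexMonomial k) ≠ 0, β k
    have hb : χ (supportSubalgebra.monomial ℂ (.ofAdd b)) ≠ 0 := by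
      rw [ofAdd_sum, map_prod, map_prod]
      exact Finset.prod_ne_zero_iff.2 fun k hk => (Finset.mem_filter.1 hk).2
    obtain ⟨N, hN⟩ := exists_nat_ge (D.degree a)
    refine D.character_ne_zero_of_coord_le χ (N := N) (fun k => ?_) hb
    have hbk : D.coord b k = if χ (D.vertexMonomial k) ≠ 0 then 1 else 0 := by
      simp [b, β, D.coord_vertex, Finset.sum_apply, Pi.single_apply]
    rw [Pi.smul_apply, hbk, nsmul_eq_mul]
    split_ifs with hk
    · simpa using (D.coord_le_degree a.2 k).trans hN
    · simp [h k (not_not.1 hk)]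

theorem exists_vertex_add_eq_iff {a : σ →₀ ℕ} {p : σ} (ha : a ∈ D.halfOpen W) :
    (∃ a' ∈ D.halfOpen W, D.vertex p + a' = a) ↔
      1 ≤ D.coord a p ∧ (p ∈ W → 1 < D.coord a p) := by
  classical
  constructor
  · rintro ⟨a', ha', rfl⟩
    have hp : D.coord (D.vertex p + a') p = 1 + D.coord a' p := by simp [coord_vertex]
    rw [hp]
    exact ⟨le_add_of_nonneg_right (ha'.1 p), fun hpW => lt_add_of_pos_right 1 (ha'.2 p hpW)⟩
  · intro ⟨hp, hpW⟩
    obtain ⟨hmem, hsub⟩ := D.sub_vertex_mem_cone ha.1 hp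
    refine ⟨a - D.vertex p, ⟨hmem, fun k hk => ?_⟩, by rw [add_comm, hsub]⟩
    have hk' := ha.2 k hk
    rw [← hsub, map_add, Pi.add_apply, coord_vertex] at hk' hpW
    obtain rfl | hkp := eq_or_ne k p
    · simpa using hpW hk
    · simpa [hkp] using hk'

theorem mem_mixedSubmodule_vertexMonomial {F : σ → D.ring} {P : Finset σ} {m : D.module W} :
    m ∈ mixedSubmodule (D.module W) D.vertexMonomial F P ∅ ↔
      ∀ a ∈ m.1.support, ∃ p ∈ P, 1 ≤ D.coord a p ∧ (p ∈ W → 1 < D.coord a p) := by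
  classical
  constructor
  · intro hm a ha
    have hsum := exists_eq_sum_smul_of_mem_mixedSubmodule (x := F) (F := D.vertexMonomial)
      (Q := P) (m := m) (by simpa [mixedSubmodule] using hm)
    obtain ⟨h, hh⟩ := hsum
    have haW := m.2 ha
    rw [hh, AddSubmonoidClass.coe_finsetSum] at ha
    obtain ⟨p, hp, hpa⟩ := Finset.mem_biUnion.1 (support_sum ha)
    obtain ⟨b, hb, a', ha', rfl⟩ := Finset.mem_add.1 (support_mul _ _ hpa)
    obtain rfl := Finset.mem_singleton.1 (support_monomial_subset hb)
    exact ⟨p, hp, (D.exists_vertex_add_eq_iff haW).1 ⟨a', (h p).2 ha', rfl⟩⟩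
  · intro hm
    have hmon : ∀ a ∈ m.1.support, ∃ e ∈ mixedSubmodule (D.module W) D.vertexMonomial F P ∅,
        e.1 = monomial a (coeff a m.1) := by
      intro a ha
      obtain ⟨p, hp, hpa⟩ := hm a ha
      obtain ⟨a', ha', rfl⟩ := (D.exists_vertex_add_eq_iff (m.2 ha)).2 hpa
      refine ⟨D.vertexMonomial p • ⟨monomial a' (coeff (D.vertex p + a') m.1),
        (monomial_mem_restrictSupport ℂ).2 (.inl ha')⟩, smul_mem_mixedSubmodule_left hp _, ?_⟩
      rw [vertexMonomial_smul, monomial_mul, one_mul]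
    choose! e he hea using hmon
    convert Submodule.sum_mem _ he
    refine Subtype.ext ?_
    rw [AddSubmonoidClass.coe_finsetSum, Finset.sum_congr rfl hea]
    exact m.1.as_sum

theorem mem_mixedSubmodule_of_vertexMonomial_smul_mem {F : σ → D.ring} {P : Finset σ} {c : σ}
    (hc : c ∉ P) {m : D.module W}
    (hm : D.vertexMonomial c • m ∈ mixedSubmodule (D.module W) D.vertexMonomial F P ∅) :
    m ∈ mixedSubmodule (D.module W) D.vertexMonomial F P ∅ := by
  classical
  rw [mem_mixedSubmodule_vertexMonomial] at hm ⊢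
  intro a ha
  obtain ⟨p, hp, hpa⟩ := hm (D.vertex c + a) (by
    rw [mem_support_iff, vertexMonomial_smul, coeff_monomial_mul, one_mul]
    exact mem_support_iff.1 ha)
  have hpc : D.coord (D.vertex c + a) p = D.coord a p := by
    rw [map_add, Pi.add_apply, coord_vertex, Pi.single_eq_of_ne (ne_of_mem_of_not_mem hp hc),
      zero_add]
  exact ⟨p, hp, hpc ▸ hpa⟩

end SimplicialCone

end SimplicialCone

section Polytope

open Filter Topology

variable {σ : Type*} {f : MvPolynomial σ ℂ}

theorem coeff_X_mul_pderiv (j : σ) (m : σ →₀ ℕ) (f : MvPolynomial σ ℂ) :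
    coeff m (X j * pderiv j f) = m j * coeff m f := by
  classical
  induction f using MvPolynomial.induction_on' with
  | monomial a c =>
    rw [X_mul_pderiv_monomial, coeff_smul, coeff_monomial, nsmul_eq_mul]
    split_ifs with h <;> simp [h]
  | add p q hp hq => rw [map_add, mul_add, coeff_add, coeff_add, hp, hq, mul_add]

theorem support_X_mul_pderiv_subset (j : σ) : (X j * pderiv j f).support ⊆ f.support := by
  intro m hm
  rw [mem_support_iff, coeff_X_mul_pderiv] at hm
  exact mem_support_iff.2 (right_ne_zero_of_mul hm)

theorem faceRestrict_eq_truncate (Δ : Set (σ → ℝ)) (g : MvPolynomial σ ℂ) :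
    faceRestrict Δ g = truncate (toR ⁻¹' Δ) g := by
  classical
  ext a
  simp only [faceRestrict, coeff_sum, coeff_truncate, apply_ite (coeff a), coeff_monomial,
    coeff_zero, Set.mem_preimage]
  rw [Finset.sum_eq_single a]
  · simp
  · intro b _ hb
    simp [hb]
  · simp +contextual

theorem zero_mem_newtonPolytope : (0 : σ → ℝ) ∈ newtonPolytope f :=
  subset_convexHull ℝ _ (.inl rfl)

theorem toR_mem_newtonPolytope {m : σ →₀ ℕ} (hm : m ∈ f.support) : toR m ∈ newtonPolytope f :=
  subset_convexHull ℝ _ (.inr ⟨m, hm, rfl⟩)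

theorem newtonPolytope_subset {s : Set (σ → ℝ)} (hs : Convex ℝ s) (hs₀ : 0 ∈ s)
    (hfs : ∀ m ∈ f.support, toR m ∈ s) : newtonPolytope f ⊆ s :=
  convexHull_min (Set.union_subset (by simpa using hs₀) (Set.image_subset_iff.2 hfs)) hs

/-- The linear functions which are at most `1` on the Newton polytope. -/
def polar (f : MvPolynomial σ ℂ) : Set ((σ → ℝ) →ₗ[ℝ] ℝ) :=
  {l | ∀ m ∈ f.support, l (toR m) ≤ 1}

variable {l d : (σ → ℝ) →ₗ[ℝ] ℝ}

theorem apply_le_one_of_mem_polar (hl : l ∈ polar f) {x : σ → ℝ} (hx : x ∈ newtonPolytope f) :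
    l x ≤ 1 :=
  newtonPolytope_subset (convex_halfSpace_le l.isLinear 1) ((map_zero l).trans_le zero_le_one) hl hx

theorem nbFace_iff {Δ : Set (σ → ℝ)} :
    NBFace f Δ ↔ Δ.Nonempty ∧ ∃ l ∈ polar f, Δ = {x ∈ newtonPolytope f | l x = 1} := by
  constructor
  · rintro ⟨⟨hΔ, l, c, hle, rfl⟩, h₀⟩
    have hc : 0 < c := by
      refine lt_of_le_of_ne (by simpa using hle 0 zero_mem_newtonPolytope) ?_
      rintro rfl
      exact h₀ ⟨zero_mem_newtonPolytope, map_zero l⟩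
    refine ⟨hΔ, c⁻¹ • l, fun m hm => ?_, ?_⟩
    · simpa [inv_mul_le_iff₀ hc] using hle _ (toR_mem_newtonPolytope hm)
    · simp [inv_mul_eq_iff_eq_mul₀ hc.ne']
  · rintro ⟨hΔ, l, hl, rfl⟩
    exact ⟨⟨hΔ, l, 1, fun x hx => apply_le_one_of_mem_polar hl hx, rfl⟩, by simp⟩

/-- The monomials of `f` at which `l` takes the value `1`. -/
def tight (f : MvPolynomial σ ℂ) (l : (σ → ℝ) →ₗ[ℝ] ℝ) : Set (σ →₀ ℕ) :=
  {m | m ∈ f.support ∧ l (toR m) = 1}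

theorem convexHull_tight (hl : l ∈ polar f) :
    convexHull ℝ (toR '' tight f l) = {x ∈ newtonPolytope f | l x = 1} := by
  have hT : convexHull ℝ (toR '' tight f l) ⊆ {x ∈ newtonPolytope f | l x = 1} := by
    refine convexHull_min (Set.image_subset_iff.2 fun m hm =>
      ⟨toR_mem_newtonPolytope hm.1, hm.2⟩) ?_
    exact (convex_convexHull ℝ _).inter (convex_hyperplane l.isLinear 1)
  refine hT.antisymm fun x ⟨hx, hlx⟩ => ?_
  /- Adding the open half-space `l < 1` keeps the hull of the tight points convex, and
  accommodates the other points. -/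
  suffices hP : newtonPolytope f ⊆ {x | l x < 1} ∪ convexHull ℝ (toR '' tight f l) from
    (hP hx).resolve_left hlx.not_lt
  refine newtonPolytope_subset (convex_iff_forall_pos.2 ?_) (.inl (by simp)) fun m hm =>
    (hl m hm).lt_or_eq.imp id fun h => subset_convexHull ℝ _ ⟨m, ⟨hm, h⟩, rfl⟩
  have hle : ∀ z ∈ {x | l x < 1} ∪ convexHull ℝ (toR '' tight f l), l z ≤ 1 :=
    fun z hz => hz.elim (fun h => le_of_lt h) fun h => (hT h).2.le
  intro y hy z hz a b ha hb hab
  by_cases hyz : l y < 1 ∨ l z < 1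
  · refine .inl ?_
    simp only [Set.mem_ofPred_eq, map_add, map_smul, smul_eq_mul]
    have := hle y hy
    have := hle z hz
    obtain h | h := hyz <;> nlinarith
  · rw [not_or] at hyz
    exact .inr (convex_convexHull ℝ _ (hy.resolve_left hyz.1) (hz.resolve_left hyz.2) ha.le hb.le
      hab)

theorem eventually_add_smul_mem_polar (hl : l ∈ polar f)
    (hd : ∀ m ∈ f.support, l (toR m) = 1 → d (toR m) ≤ 0) :
    ∀ᶠ ε : ℝ in 𝓝[>] 0, l + ε • d ∈ polar f ∧ ∀ m ∈ f.support,
      (l + ε • d) (toR m) = 1 ↔ l (toR m) = 1 ∧ d (toR m) = 0 := by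
  suffices h : ∀ᶠ ε : ℝ in 𝓝[>] 0, ∀ m ∈ f.support, (l + ε • d) (toR m) ≤ 1 ∧
      ((l + ε • d) (toR m) = 1 ↔ l (toR m) = 1 ∧ d (toR m) = 0) from
    h.mono fun ε hε => forall₂_and.1 hε
  rw [eventually_all_finset]
  intro m hm
  simp only [LinearMap.add_apply, LinearMap.smul_apply, smul_eq_mul]
  obtain hm1 | hm1 := (hl m hm).lt_or_eq
  · have hlim : Tendsto (fun ε : ℝ => l (toR m) + ε * d (toR m)) (𝓝[>] 0) (𝓝 (l (toR m))) :=
      tendsto_nhdsWithin_of_tendsto_nhds (Continuous.tendsto' (by fun_prop) _ _ (by simp))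
    filter_upwards [hlim.eventually_lt_const hm1] with ε hε
    exact ⟨hε.le, iff_of_false hε.ne fun h => hm1.ne h.1⟩
  · filter_upwards [self_mem_nhdsWithin] with ε hε
    have hε : 0 < ε := hε
    rw [hm1, add_eq_left, mul_eq_zero, or_iff_right hε.ne', add_le_iff_nonpos_right]
    exact ⟨mul_nonpos_of_nonneg_of_nonpos hε.le (hd m hm hm1), by simp⟩

end Polytope

section Facet

variable {σ : Type*} [Fintype σ] {f : MvPolynomial σ ℂ}

/-- A simplicial facet of the Newton boundary, given by the cone over it. -/
structure Facet (f : MvPolynomial σ ℂ) extends SimplicialCone σ where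
  vertex_mem_support : ∀ k, vertex k ∈ f.support
  degree_le_one : ∀ m ∈ f.support, toSimplicialCone.degree m ≤ 1
  mem_cone : ∀ m ∈ f.support, toSimplicialCone.degree m = 1 → m ∈ toSimplicialCone.cone

namespace Facet

variable (D : Facet f)

theorem height_mem_polar : D.height ∈ polar f :=
  D.degree_le_one

theorem exists_nbFace {T : Set σ} (hT : T.Nonempty) :
    ∃ Δ, NBFace f Δ ∧ ∀ m ∈ f.support,
      toR m ∈ Δ ↔ D.degree m = 1 ∧ ∀ k ∉ T, D.coord m k = 0 := by
  classical
  obtain ⟨k, hk⟩ := hT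
  let s : (σ → ℝ) →ₗ[ℝ] ℝ := ∑ k with k ∉ T, D.basis.coord k
  have hs (m) : s (toR m) = ∑ k with k ∉ T, D.coord m k := by simp [s, D.coord_apply]
  have hpos {m} (hm : m ∈ D.cone) : ∀ k ∈ ({k | k ∉ T} : Finset σ), 0 ≤ D.coord m k :=
    fun k _ => hm k
  obtain ⟨ε, hpolar, htight⟩ := (eventually_add_smul_mem_polar (d := -s) D.height_mem_polar
    fun m hm hm1 => neg_nonpos.2
      (hs m ▸ Finset.sum_nonneg (hpos (D.mem_cone m hm hm1)))).exists
  have hmem : ∀ m ∈ f.support, toR m ∈ {x ∈ newtonPolytope f | (D.height + ε • -s) x = 1} ↔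
      D.degree m = 1 ∧ ∀ k ∉ T, D.coord m k = 0 := fun m hm => by
    refine (and_iff_right (toR_mem_newtonPolytope hm)).trans ((htight m hm).trans
      (and_congr_right fun hm1 => ?_))
    rw [LinearMap.neg_apply, neg_eq_zero, hs,
      Finset.sum_eq_zero_iff_of_nonneg (hpos (D.mem_cone m hm hm1))]
    simp only [Finset.mem_filter, Finset.mem_univ, true_and]
  refine ⟨_, nbFace_iff.2 ⟨⟨toR (D.vertex k), ?_⟩, _, hpolar, rfl⟩, hmem⟩
  refine (hmem _ (D.vertex_mem_support k)).2 ⟨D.degree_vertex k, fun k' hk' => ?_⟩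
  rw [D.coord_vertex, Pi.single_eq_of_ne (ne_of_mem_of_not_mem hk hk').symm]

/-- The initial forms of the `uⱼ ∂f/∂uⱼ` along the facet. -/
noncomputable def initialForm (j : σ) : D.ring :=
  ⟨truncate {a | D.degree a = 1} (X j * pderiv j f),
    truncate_mem fun a ha => D.mem_cone a (support_X_mul_pderiv_subset j ha)⟩

theorem coeff_initialForm (j : σ) (a : σ →₀ ℕ) :
    coeff a (D.initialForm j).1 = a j * coeff a (truncate {a | D.degree a = 1} f) := by
  classical
  change coeff a (truncate _ _) = _
  rw [coeff_truncate, coeff_truncate, coeff_X_mul_pderiv, mul_ite, mul_zero]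

/-- The change of basis from the standard basis to the vertices, with coefficients in `D.ring`. -/
noncomputable def toVertexMatrix : Matrix σ σ D.ring :=
  (D.basis.toMatrix (Pi.basisFun ℝ σ)).map ((algebraMap ℂ D.ring).comp Complex.ofRealHom)

/-- The change of basis from the vertices to the standard basis, with coefficients in `D.ring`. -/
noncomputable def ofVertexMatrix : Matrix σ σ D.ring :=
  ((Pi.basisFun ℝ σ).toMatrix D.basis).map ((algebraMap ℂ D.ring).comp Complex.ofRealHom)

/-- The initial forms of the derivatives of `f` in the logarithmic directions dual to the vertices.
Unlike those of the `initialForm D j`, the monomials of `dualForm D k` avoid the wall opposite to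
the vertex `k`. -/
noncomputable def dualForm : σ → D.ring :=
  D.toVertexMatrix.mulVec D.initialForm

theorem coeff_dualForm (k : σ) (a : σ →₀ ℕ) :
    coeff a (D.dualForm k).1 = D.coord a k * coeff a (truncate {a | D.degree a = 1} f) := by
  have hcoord : ∑ j, D.basis.toMatrix (Pi.basisFun ℝ σ) k j * a j = D.coord a k :=
    congr_fun ((Pi.basisFun ℝ σ).toMatrix_mulVec_repr D.basis (toR a)) k
  have hsum : (D.dualForm k).1 =
      ∑ j, C (D.basis.toMatrix (Pi.basisFun ℝ σ) k j : ℂ) * (D.initialForm j).1 :=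
    AddSubmonoidClass.coe_finsetSum _ _
  rw [hsum, coeff_sum, ← hcoord]
  push_cast
  rw [Finset.sum_mul]
  exact Finset.sum_congr rfl fun j _ => by rw [coeff_C_mul, coeff_initialForm, mul_assoc]

theorem degree_eq_one_of_mem_support_dualForm {k : σ} {a : σ →₀ ℕ}
    (ha : a ∈ (D.dualForm k).1.support) : D.degree a = 1 ∧ D.coord a k ≠ 0 := by
  rw [mem_support_iff, coeff_dualForm] at ha
  exact ⟨(mem_support_truncate.1 (mem_support_iff.2 (right_ne_zero_of_mul ha))).2,
    Complex.ofReal_ne_zero.1 (left_ne_zero_of_mul ha)⟩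

theorem sMulHasDegree_vertexMonomial (W : Set σ) (k : σ) :
    SMulHasDegree (M := D.module W) (supportModule.component D.degree) (D.vertexMonomial k) 1 :=
  supportModule.sMulHasDegree_component fun a ha => by
    rw [Finset.mem_singleton.1 (support_monomial_subset ha)]
    exact D.degree_vertex k

theorem sMulHasDegree_dualForm (W : Set σ) (k : σ) :
    SMulHasDegree (M := D.module W) (supportModule.component D.degree) (D.dualForm k) 1 :=
  supportModule.sMulHasDegree_component fun _ ha =>
    (D.degree_eq_one_of_mem_support_dualForm ha).1

theorem mem_mixedSubmodule_of_forall_vertexMonomial_pow {W : Set σ} {P Q : Finset σ} {c : σ}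
    {m : D.module W}
    (hm : ∀ k : ℕ, ∃ n, m - D.vertexMonomial c ^ k • n ∈
      mixedSubmodule (D.module W) D.vertexMonomial D.dualForm P Q) :
    m ∈ mixedSubmodule (D.module W) D.vertexMonomial D.dualForm P Q :=
  mem_mixedSubmodule_of_forall_pow (M := D.module W) (π := supportModule.component D.degree)
    (supportModule.exists_eq_sum_component D.degree)
    (fun _ hα => supportModule.component_eq_zero fun _ ha h =>
      hα.not_ge (h ▸ D.degree_nonneg ha.1))
    zero_lt_one (D.sMulHasDegree_vertexMonomial W) (D.sMulHasDegree_dualForm W) hm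

theorem ofVertexMatrix_mul_toVertexMatrix [DecidableEq σ] :
    D.ofVertexMatrix * D.toVertexMatrix = 1 := by
  rw [ofVertexMatrix, toVertexMatrix, ← Matrix.map_mul, Module.Basis.toMatrix_mul_toMatrix_flip,
    Matrix.map_one _ (map_zero _) (map_one _)]

theorem ofVertexMatrix_mulVec_dualForm : D.ofVertexMatrix.mulVec D.dualForm = D.initialForm := by
  classical
  rw [dualForm, Matrix.mulVec_mulVec, ofVertexMatrix_mul_toVertexMatrix, Matrix.one_mulVec]

theorem exists_vertexMonomial_pow_mem [DecidableEq σ] (hnd : Nondegenerate f)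
    (P Q : Finset σ) (c : σ) (hPQ : ∀ i, i ∈ insert c (P ∪ Q)) : ∃ k : ℕ, D.vertexMonomial c ^ k ∈
      Ideal.span (D.vertexMonomial '' P ∪ D.dualForm '' Q) ⊔ Ideal.span {D.dualForm c} := by
  by_contra! hpow
  obtain ⟨χ, hχ, hχc⟩ := exists_algHom_of_forall_pow_notMem (K := ℂ) hpow
  obtain ⟨x, hx, hχx⟩ := exists_torus_point χ
  have hF (k : σ) : χ (D.dualForm k) = 0 := by
    by_cases hk : χ (D.vertexMonomial k) = 0
    · rw [hχx, truncate_eq_zero, map_zero]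
      rintro a ha ⟨haC, hχa⟩
      exact (D.degree_eq_one_of_mem_support_dualForm ha).2
        ((D.character_ne_zero_iff χ ⟨a, haC⟩).1 hχa k hk)
    · have hkP : k ∉ P := fun hkP => hk
        (hχ _ (Ideal.mem_sup_left (Ideal.subset_span (.inl ⟨k, hkP, rfl⟩))))
      have hkQ := hPQ k
      rw [Finset.mem_insert, Finset.mem_union, or_iff_right hkP] at hkQ
      obtain rfl | hkQ := hkQ
      · exact hχ _ (Ideal.mem_sup_right (Ideal.mem_span_singleton_self _))
      · exact hχ _ (Ideal.mem_sup_left (Ideal.subset_span (.inr ⟨k, hkQ, rfl⟩)))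
  obtain ⟨Δ, hΔ, hmem⟩ := D.exists_nbFace (T := {k | χ (D.vertexMonomial k) ≠ 0}) ⟨c, hχc⟩
  refine hnd Δ hΔ ⟨x, hx, fun j => ?_⟩
  have hG : χ (D.initialForm j) = 0 := by
    rw [← ofVertexMatrix_mulVec_dualForm, Matrix.mulVec, dotProduct, map_sum]
    exact Finset.sum_eq_zero fun k _ => by rw [map_mul, hF, mul_zero]
  rw [← hG, hχx, faceRestrict_eq_truncate]
  congr 1
  ext a
  by_cases ha : a ∈ f.support
  · have hiff : toR a ∈ Δ ↔ (∃ h : a ∈ D.cone,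
        χ (supportSubalgebra.monomial ℂ (.ofAdd ⟨a, h⟩)) ≠ 0) ∧ D.degree a = 1 := by
      rw [hmem a ha, and_comm, and_congr_left_iff]
      intro ha1
      rw [exists_prop_of_true (D.mem_cone a ha ha1), D.character_ne_zero_iff]
      simp only [Set.mem_ofPred_eq, not_not]
    classical
    simp only [coeff_truncate, coeff_initialForm, coeff_X_mul_pderiv, Set.mem_preimage, hiff,
      Set.mem_ofPred_eq, ite_and, mul_ite, mul_zero]
  · classical
    simp [coeff_truncate, coeff_initialForm, coeff_X_mul_pderiv, notMem_support_iff.1 ha]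

theorem isExchangeable [DecidableEq σ] (hnd : Nondegenerate f) (W : Set σ) :
    IsExchangeable (D.module W) D.vertexMonomial D.dualForm where
  separated _ _ _ _ := D.mem_mixedSubmodule_of_forall_vertexMonomial_pow
  mem_of_smul_mem _ _ hc _ := D.mem_mixedSubmodule_of_vertexMonomial_smul_mem hc
  exists_pow_mem := D.exists_vertexMonomial_pow_mem hnd

theorem isKoszulExact_initialForm (hnd : Nondegenerate f) (W : Set σ) :
    IsKoszulExact (D.module W) D.initialForm := by
  classical
  exact .of_mulVec D.ofVertexMatrix_mul_toVertexMatrix (D.isExchangeable hnd W).isKoszulExact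

theorem sum_initialForm_smul_mem {W : Set σ} (g : σ → D.module W) :
    ∑ j, D.initialForm j • g j ∈
      mixedSubmodule (D.module W) D.vertexMonomial D.dualForm ∅ Finset.univ := by
  rw [← ofVertexMatrix_mulVec_dualForm, sum_mulVec_smul]
  exact sum_mem fun k _ => smul_mem_mixedSubmodule_right (Finset.mem_univ k) _

theorem exists_ne_sum_initialForm_smul (hnd : Nondegenerate f) {W : Set σ} {a : σ →₀ ℕ}
    (ha : a ∈ D.halfOpen W) (ha1 : ∀ p, D.coord a p ≤ 1) (haW : ∀ p ∉ W, D.coord a p < 1) :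
    ∃ h : D.module W, (∀ b ∈ h.1.support, D.degree b = D.degree a) ∧
      ∀ g : σ → D.module W, h ≠ ∑ j, D.initialForm j • g j := by
  classical
  by_contra! hcon
  have hfin (α : ℝ) : FiniteDimensional ℂ (LinearMap.range
      (supportModule.component (R := ℂ) (h := D.cone_add_halfOpen_subset (W := W)) D.degree α)) :=
    supportModule.finite_range_component
      ((D.finite_degree_le α).subset fun b hb => ⟨hb.1.1, hb.2.le⟩)
  have hrange := (D.isExchangeable hnd W).range_le_mixedSubmodule
    (fun _ => supportModule.component_component) (D.sMulHasDegree_vertexMonomial W)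
    (D.sMulHasDegree_dualForm W) (α := D.degree a) (by
      rintro _ ⟨m, rfl⟩
      obtain ⟨g, hg⟩ := hcon (supportModule.component D.degree (D.degree a) m) fun b hb =>
        (mem_support_truncate.1 hb).2
      rw [hg]
      exact D.sum_initialForm_smul_mem g) Finset.univ
  have hmon : monomial a 1 ∈ D.module W := (monomial_mem_restrictSupport ℂ).2 (.inl ha)
  have hmem := hrange ⟨⟨_, hmon⟩, supportModule.component_of_forall fun b hb => by
    rw [Finset.mem_singleton.1 (support_monomial_subset hb)]⟩
  rw [Finset.compl_univ] at hmem
  obtain ⟨p, -, hp, hpW⟩ := D.mem_mixedSubmodule_vertexMonomial.1 hmem a (by simp)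
  by_cases hpW' : p ∈ W
  · exact (hpW hpW').not_ge (ha1 p)
  · exact (haW p hpW').not_ge hp

end Facet

end Facet

section Fan

variable {σ : Type*} [Fintype σ] {f : MvPolynomial σ ℂ}

namespace SimplicialCone

variable (D : SimplicialCone σ)

theorem apply_eq_sum_repr_mul (l : (σ → ℝ) →ₗ[ℝ] ℝ) (x : σ → ℝ) :
    l x = ∑ k, D.basis.repr x k * l (toR (D.vertex k)) := by
  conv_lhs => rw [← D.basis.sum_repr x]
  simp [D.basis_apply]

theorem height_eq_sum_repr (x : σ → ℝ) : D.height x = ∑ k, D.basis.repr x k :=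
  LinearMap.sum_apply _ _ _

/-- The walls, labelled by the opposite vertices, through which the direction `ξ` leaves the
cone. -/
def walls (ξ : σ → ℝ) : Set σ :=
  {k | D.basis.repr ξ k < 0}

end SimplicialCone

namespace Facet

variable (D D' : Facet f)

variable {l : (σ → ℝ) →ₗ[ℝ] ℝ} {x : σ → ℝ}

theorem repr_mul_apply_vertex_le (hl : l ∈ polar f) {k : σ} (hx : 0 ≤ D.basis.repr x k) :
    D.basis.repr x k * l (toR (D.vertex k)) ≤ D.basis.repr x k :=
  mul_le_of_le_one_right hx (hl _ (D.vertex_mem_support k))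

theorem apply_le_height (hl : l ∈ polar f) (hx : ∀ k, 0 ≤ D.basis.repr x k) :
    l x ≤ D.height x := by
  rw [D.apply_eq_sum_repr_mul, D.height_eq_sum_repr]
  exact Finset.sum_le_sum fun k _ => D.repr_mul_apply_vertex_le hl (hx k)

theorem apply_vertex_eq_one (hl : l ∈ polar f) (hx : ∀ k, 0 ≤ D.basis.repr x k)
    (h : l x = D.height x) {k : σ} (hk : D.basis.repr x k ≠ 0) : l (toR (D.vertex k)) = 1 := by
  rw [D.apply_eq_sum_repr_mul, D.height_eq_sum_repr,
    Finset.sum_eq_sum_iff_of_le fun k _ => D.repr_mul_apply_vertex_le hl (hx k)] at h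
  exact (mul_eq_left₀ hk).1 (h k (Finset.mem_univ k))

theorem height_le_height {ξ : σ → ℝ} {a : σ →₀ ℕ} (ha : a ∈ D.halfOpen (D.walls ξ))
    (hdeg : D'.degree a = D.degree a) : D'.height ξ ≤ D.height ξ := by
  rw [D.apply_eq_sum_repr_mul, D.height_eq_sum_repr]
  refine Finset.sum_le_sum fun k _ => ?_
  by_cases hk : k ∈ D.walls ξ
  · rw [D.apply_vertex_eq_one D'.height_mem_polar ha.1 hdeg (ha.2 k hk).ne', mul_one]
  · exact D.repr_mul_apply_vertex_le D'.height_mem_polar (not_lt.1 hk)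

theorem sMulHasDegree_initialForm (W : Set σ) (j : σ) :
    SMulHasDegree (M := D.module W) (supportModule.component D.degree) (D.initialForm j) 1 :=
  supportModule.sMulHasDegree_component fun _ ha => (mem_support_truncate.1 ha).2

open Pointwise in
theorem mem_degree_smul_newtonPolytope {a : σ →₀ ℕ} (ha : a ∈ D.cone) (h₀ : D.degree a ≠ 0) :
    toR a ∈ D.degree a • newtonPolytope f := by
  rw [Set.mem_smul_set_iff_inv_smul_mem₀ h₀, ← D.basis.sum_repr (toR a), Finset.smul_sum]
  simp_rw [smul_smul, D.basis_apply]
  refine (convex_convexHull ℝ _).sum_mem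
    (fun k _ => mul_nonneg (inv_nonneg.2 (D.degree_nonneg ha)) (ha k)) ?_
    fun k _ => toR_mem_newtonPolytope (D.vertex_mem_support k)
  rw [← Finset.mul_sum, ← inv_mul_cancel₀ h₀, D.degree_eq_sum]
  rfl

theorem nu_eq_degree {a : σ →₀ ℕ} (ha : a ∈ D.cone) : nu f (toR a) = D.degree a := by
  obtain h₀ | h₀ := eq_or_ne (D.degree a) 0
  · have hcoord : D.coord a = 0 := funext fun k =>
      (Finset.sum_eq_zero_iff_of_nonneg fun k _ => ha k).1 (D.degree_eq_sum a ▸ h₀) k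
        (Finset.mem_univ k)
    obtain rfl := D.coord_injective (hcoord.trans (map_zero D.coord).symm)
    rw [map_zero, nu, show toR 0 = 0 from toRHom.map_zero, gauge_zero]
  · have hpos := (D.degree_nonneg ha).lt_of_ne' h₀
    have hmem := D.mem_degree_smul_newtonPolytope ha h₀
    refine (gauge_le_of_mem hpos.le hmem).antisymm (le_csInf ⟨_, hpos, hmem⟩ ?_)
    rintro r ⟨hr, y, hy, hya⟩
    have hy1 := apply_le_one_of_mem_polar D.height_mem_polar hy
    rw [← D.height_toR, ← hya, map_smul]
    exact mul_le_of_le_one_right hr.le hy1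

end Facet

theorem exists_eq_sum_of_mem_LIdeal {g : MvPolynomial σ ℂ} (hg : g ∈ LIdeal f) :
    ∃ h : σ → MvPolynomial σ ℂ, ∑ j, X j * pderiv j f * h j = g := by
  obtain ⟨h, rfl⟩ := (Submodule.mem_span_range_iff_exists_fun _).1 hg
  exact ⟨h, Finset.sum_congr rfl fun j _ => mul_comm _ _⟩

/-- Finitely many facets together with a direction `ξ`, generic in the sense of
`height_direction_injective`, such that every `a + ε ξ` with `ε > 0` small lies in the cone over one
of them. -/
structure GenericFan (f : MvPolynomial σ ℂ) (ι : Type*) where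
  facet : ι → Facet f
  direction : σ → ℝ
  height_direction_injective : Function.Injective fun i => (facet i).height direction
  exists_mem_halfOpen : ∀ a, ∃ i, a ∈ (facet i).halfOpen ((facet i).walls direction)

namespace GenericFan

variable {ι : Type*} (Φ : GenericFan f ι) {i : ι} {α : ℝ} {a m : σ →₀ ℕ}

/-- The exponents `a` such that `a + ε ξ` lies in the cone over the facet for small `ε > 0`. -/
def sector (i : ι) : Set (σ →₀ ℕ) :=
  (Φ.facet i).halfOpen ((Φ.facet i).walls Φ.direction)

/-- The span of the monomials with exponent in a sector. -/
noncomputable abbrev module (i : ι) : Submodule (Φ.facet i).ring (MvPolynomial σ ℂ) :=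
  (Φ.facet i).module ((Φ.facet i).walls Φ.direction)

/-- The facet whose sector contains `a`. -/
noncomputable def index (a : σ →₀ ℕ) : ι :=
  (Φ.exists_mem_halfOpen a).choose

theorem mem_sector_index (a : σ →₀ ℕ) : a ∈ Φ.sector (Φ.index a) :=
  (Φ.exists_mem_halfOpen a).choose_spec

/-- The weight of the exponents of degree `α` in the sector `i`. -/
noncomputable def level (i : ι) (α : ℝ) : ℝ ×ₗ ℝ :=
  toLex (α, (Φ.facet i).height Φ.direction)

/-- The Newton function, refined to a lexicographic order which separates the sectors. It is
`ν (a + ε ξ)` for an infinitesimal `ε > 0`. -/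
noncomputable def weight (a : σ →₀ ℕ) : ℝ ×ₗ ℝ :=
  Φ.level (Φ.index a) ((Φ.facet (Φ.index a)).degree a)

theorem level_le_level {i' : ι} {α' : ℝ} :
    Φ.level i α ≤ Φ.level i' α' ↔ α < α' ∨ α = α' ∧
      (Φ.facet i).height Φ.direction ≤ (Φ.facet i').height Φ.direction :=
  Prod.Lex.toLex_le_toLex

theorem level_lt_level_add_one {i' : ι} {α' : ℝ} :
    Φ.level i (α + 1) < Φ.level i' (α' + 1) ↔ Φ.level i α < Φ.level i' α' := by
  simp [level, Prod.Lex.toLex_lt_toLex]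

theorem level_degree_le_of_mem_sector {i' : ι} (ha : a ∈ Φ.sector i') :
    Φ.level i ((Φ.facet i).degree a) ≤ Φ.level i' ((Φ.facet i').degree a) :=
  Φ.level_le_level.2 <| ((Φ.facet i').apply_le_height
    (Φ.facet i).height_mem_polar ha.1).lt_or_eq.imp_right fun h =>
      ⟨h, (Φ.facet i').height_le_height _ ha h⟩

theorem level_degree_le_weight (i : ι) (a : σ →₀ ℕ) :
    Φ.level i ((Φ.facet i).degree a) ≤ Φ.weight a :=
  Φ.level_degree_le_of_mem_sector (Φ.mem_sector_index a)

theorem weight_eq_level_iff :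
    Φ.weight a = Φ.level i α ↔ a ∈ Φ.sector i ∧ (Φ.facet i).degree a = α := by
  constructor
  · intro h
    obtain ⟨hα, hi⟩ := Prod.ext_iff.1 (toLex.injective h)
    obtain rfl := Φ.height_direction_injective hi
    exact ⟨Φ.mem_sector_index a, hα⟩
  · rintro ⟨ha, rfl⟩
    exact (Φ.level_degree_le_of_mem_sector ha).antisymm (Φ.level_degree_le_weight i a)

theorem weight_add_le (hm : m ∈ f.support) (ha : Φ.weight a ≤ Φ.level i α) :
    Φ.weight (m + a) ≤ Φ.level i (α + 1) := by
  refine le_of_not_gt fun hlt => ((Φ.level_degree_le_weight _ a).trans ha).not_gt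
    (Φ.level_lt_level_add_one.1 (hlt.trans_le ?_) : _ < Φ.level (Φ.index (m + a)) _)
  refine Φ.level_le_level.2 ((lt_or_eq_of_le ?_).imp_right fun h => ⟨h, le_rfl⟩)
  rw [map_add, add_comm]
  gcongr
  exact (Φ.facet _).degree_le_one m hm

theorem weight_add_eq_level_iff (hm : m ∈ f.support) (ha : Φ.weight a ≤ Φ.level i α) :
    Φ.weight (m + a) = Φ.level i (α + 1) ↔
      (Φ.facet i).degree m = 1 ∧ Φ.weight a = Φ.level i α := by
  constructor
  · intro h
    obtain ⟨-, hdeg⟩ := Φ.weight_eq_level_iff.1 h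
    have hle := (Φ.level_degree_le_weight i a).trans ha
    have hα : (Φ.facet i).degree a ≤ α := by
      simpa [le_iff_lt_or_eq] using Φ.level_le_level.1 hle
    have hm1 := (Φ.facet i).degree_le_one m hm
    rw [map_add] at hdeg
    refine ⟨by linarith, ha.antisymm ?_⟩
    rw [show α = (Φ.facet i).degree a by linarith]
    exact Φ.level_degree_le_weight i a
  · intro ⟨hm1, h⟩
    obtain ⟨hmem, rfl⟩ := Φ.weight_eq_level_iff.1 h
    refine Φ.weight_eq_level_iff.2 ⟨?_, by rw [map_add, hm1, add_comm]⟩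
    exact (Φ.facet i).cone_add_halfOpen_subset
      (Set.add_mem_add ((Φ.facet i).mem_cone m hm hm1) hmem)

theorem finite_weight_le [Finite ι] (ω : ℝ ×ₗ ℝ) : {a | Φ.weight a ≤ ω}.Finite := by
  refine (Set.finite_iUnion fun i => (Φ.facet i).finite_degree_le (ofLex ω).1).subset
    fun a ha => Set.mem_iUnion.2 ⟨Φ.index a, (Φ.mem_sector_index a).1, ?_⟩
  exact (Prod.Lex.monotone_fst _ _ ha :)

/-- The homogeneous part of weight `level i α`. -/
noncomputable def symbol (i : ι) (α : ℝ) : MvPolynomial σ ℂ →ₗ[ℂ] Φ.module i where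
  toFun p := ⟨truncate {a | Φ.weight a = Φ.level i α} p,
    truncate_mem fun _ _ ha => (Φ.weight_eq_level_iff.1 ha).1⟩
  map_add' _ _ := Subtype.ext (map_add _ _ _)
  map_smul' _ _ := Subtype.ext (map_smul _ _ _)

theorem symbol_eq_zero {p : MvPolynomial σ ℂ}
    (hp : ∀ a ∈ p.support, Φ.weight a ≠ Φ.level i α) : Φ.symbol i α p = 0 :=
  Subtype.ext (truncate_eq_zero hp)

theorem symbol_coe {g : Φ.module i} (hg : ∀ a ∈ g.1.support, (Φ.facet i).degree a = α) :
    Φ.symbol i α g = g :=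
  Subtype.ext (truncate_eq_self fun a ha => Φ.weight_eq_level_iff.2 ⟨g.2 ha, hg a ha⟩)

theorem degree_eq_of_mem_support_symbol {p : MvPolynomial σ ℂ}
    (ha : a ∈ (Φ.symbol i α p).1.support) : (Φ.facet i).degree a = α :=
  (Φ.weight_eq_level_iff.1 (mem_support_truncate.1 ha).2).2

/-- The polynomials of weight at most `ω`. -/
noncomputable def weightLE (ω : ℝ ×ₗ ℝ) : Submodule ℂ (MvPolynomial σ ℂ) :=
  restrictSupport ℂ {a | Φ.weight a ≤ ω}

theorem coe_mem_weightLE {g : Φ.module i} (hg : ∀ a ∈ g.1.support, (Φ.facet i).degree a = α) :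
    g.1 ∈ Φ.weightLE (Φ.level i α) := fun a ha =>
  (Φ.weight_eq_level_iff.2 ⟨g.2 ha, hg a ha⟩).le

theorem weight_lt_of_symbol_eq_zero {p : MvPolynomial σ ℂ} (hp : p ∈ Φ.weightLE (Φ.level i α))
    (h0 : Φ.symbol i α p = 0) : ∀ a ∈ p.support, Φ.weight a < Φ.level i α := by
  refine fun a ha => (hp ha).lt_of_ne fun h => ?_
  have hmem : a ∈ (Φ.symbol i α p).1.support := mem_support_truncate.2 ⟨ha, h⟩
  rw [h0] at hmem
  simp at hmem

theorem symbol_X_mul_pderiv_mul {j : σ} {h : MvPolynomial σ ℂ}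
    (hh : h ∈ Φ.weightLE (Φ.level i α)) :
    Φ.symbol i (α + 1) (X j * pderiv j f * h) =
      (Φ.facet i).initialForm j • Φ.symbol i α h :=
  Subtype.ext (truncate_mul fun _ hm _ ha =>
    Φ.weight_add_eq_level_iff (support_X_mul_pderiv_subset j hm) (hh ha))

theorem X_mul_pderiv_mul_mem_weightLE {j : σ} {h : MvPolynomial σ ℂ}
    (hh : h ∈ Φ.weightLE (Φ.level i α)) :
    X j * pderiv j f * h ∈ Φ.weightLE (Φ.level i (α + 1)) := by
  classical
  intro e he
  obtain ⟨m, hm, a, ha, rfl⟩ := Finset.mem_add.1 (support_mul _ _ he)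
  exact Φ.weight_add_le (support_X_mul_pderiv_subset j hm) (hh ha)

theorem exists_sum_eq_of_sum_symbol_eq_zero (hnd : Nondegenerate f) {h : σ → MvPolynomial σ ℂ}
    (hh : ∀ j, h j ∈ Φ.weightLE (Φ.level i (α + 1)))
    (hsum : ∑ j, (Φ.facet i).initialForm j • Φ.symbol i (α + 1) (h j) = 0) :
    ∃ h' : σ → MvPolynomial σ ℂ, (∀ j, ∀ a ∈ (h' j).support, Φ.weight a < Φ.level i (α + 1)) ∧
      ∑ j, X j * pderiv j f * h' j = ∑ j, X j * pderiv j f * h j := by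
  classical
  obtain ⟨k, hk, hsymb⟩ := ((Φ.facet i).isKoszulExact_initialForm hnd _).exists_antisymm_of_degree
    ((Φ.facet i).sMulHasDegree_initialForm _)
    (fun j => supportModule.component_of_forall fun _ ha =>
      Φ.degree_eq_of_mem_support_symbol ha) hsum
  rw [add_sub_cancel_right] at hsymb
  let K (j l : σ) : Φ.module i := supportModule.component (Φ.facet i).degree α (k j l)
  have hKdeg (j l) : ∀ a ∈ (K j l).1.support, (Φ.facet i).degree a = α :=
    fun a ha => (mem_support_truncate.1 ha).2
  have hKle (j l) := Φ.coe_mem_weightLE (hKdeg j l)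
  have hKanti (j l) : (K j l).1 = -(K l j).1 := by
    simp only [K, hk j l, map_neg, NegMemClass.coe_neg]
  refine ⟨fun j => h j - ∑ l, X l * pderiv l f * (K j l).1, fun j => ?_, ?_⟩
  · refine Φ.weight_lt_of_symbol_eq_zero (sub_mem (hh j) (sum_mem fun l _ =>
      Φ.X_mul_pderiv_mul_mem_weightLE (hKle j l))) ?_
    rw [map_sub, map_sum, sub_eq_zero, hsymb j]
    refine Finset.sum_congr rfl fun l _ => ?_
    rw [Φ.symbol_X_mul_pderiv_mul (hKle j l), Φ.symbol_coe (hKdeg j l)]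
  · simp only [mul_sub, Finset.sum_sub_distrib, sub_eq_self]
    exact sum_smul_sum_smul_eq_zero (fun l => X l * pderiv l f) hKanti

/-- The exponents of weight at most that of a monomial of some `h j`. -/
def lowerSupport (h : σ → MvPolynomial σ ℂ) : Set (σ →₀ ℕ) :=
  {a | ∃ j, ∃ b ∈ (h j).support, Φ.weight a ≤ Φ.weight b}

theorem finite_lowerSupport [Finite ι] (h : σ → MvPolynomial σ ℂ) :
    (Φ.lowerSupport h).Finite := by
  refine (Set.finite_iUnion fun j => (h j).support.finite_toSet.biUnion fun b _ =>
    Φ.finite_weight_le (Φ.weight b)).subset fun a ⟨j, b, hb, hab⟩ => ?_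
  exact Set.mem_iUnion.2 ⟨j, Set.mem_biUnion hb hab⟩

theorem exists_mem_weightLE [Finite ι] (hnd : Nondegenerate f) (h : σ → MvPolynomial σ ℂ)
    (hsum : ∑ j, X j * pderiv j f * h j ∈ Φ.weightLE (Φ.level i (α + 1))) :
    ∃ h' : σ → MvPolynomial σ ℂ, (∀ j, h' j ∈ Φ.weightLE (Φ.level i α)) ∧
      ∑ j, X j * pderiv j f * h' j = ∑ j, X j * pderiv j f * h j := by
  classical
  induction hN : (Φ.lowerSupport h).ncard using Nat.strong_induction_on generalizing h with
  | _ N ih =>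
  subst hN
  by_cases hle : ∀ j, h j ∈ Φ.weightLE (Φ.level i α)
  · exact ⟨h, hle, rfl⟩
  obtain ⟨j₁, hj₁⟩ := not_forall.1 hle
  obtain ⟨a, ha, hia⟩ := Set.not_subset.1 hj₁
  obtain ⟨b, hb, hmax⟩ := (Finset.univ.biUnion fun j => (h j).support).exists_max_image Φ.weight
    ⟨a, Finset.mem_biUnion.2 ⟨j₁, Finset.mem_univ _, ha⟩⟩
  obtain ⟨j₀, -, hb⟩ := Finset.mem_biUnion.1 hb
  replace hmax (j) : h j ∈ Φ.weightLE (Φ.weight b) := fun a ha =>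
    hmax a (Finset.mem_biUnion.2 ⟨j, Finset.mem_univ _, ha⟩)
  have hib : Φ.level i α < Φ.weight b := (not_le.1 hia).trans_le (hmax j₁ ha)
  obtain ⟨i', α', hbα⟩ : ∃ i' α', Φ.weight b = Φ.level i' (α' + 1) :=
    ⟨Φ.index b, _, by rw [sub_add_cancel, weight]⟩
  rw [hbα] at hmax
  obtain ⟨h', hlt, hsum'⟩ := Φ.exists_sum_eq_of_sum_symbol_eq_zero hnd hmax (by
    simp_rw [← Φ.symbol_X_mul_pderiv_mul (hmax _), ← map_sum]
    exact Φ.symbol_eq_zero fun e he => ((hsum he).trans_lt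
      (Φ.level_lt_level_add_one.2 (hbα ▸ hib))).ne)
  rw [← hsum'] at hsum ⊢
  refine ih _ (Set.ncard_lt_ncard (LE.le.ssubset_of_mem_notMem (a := b) ?_
    ⟨j₀, b, hb, le_rfl⟩ ?_) (Φ.finite_lowerSupport h)) h' hsum rfl
  · rintro e ⟨j, c, hc, hec⟩
    exact ⟨j₀, b, hb, hbα ▸ hec.trans (hlt j c hc).le⟩
  · rintro ⟨j, c, hc, hbc⟩
    exact (hbα ▸ hbc).not_gt (hlt j c hc)

theorem nu_eq_degree_index (a : σ →₀ ℕ) :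
    nu f (toR a) = (Φ.facet (Φ.index a)).degree a :=
  (Φ.facet _).nu_eq_degree (Φ.mem_sector_index a).1

theorem weight_lt_of_nu_lt (ha : nu f (toR a) < α) : Φ.weight a < Φ.level i α :=
  Prod.Lex.toLex_lt_toLex.2 (.inl (Φ.nu_eq_degree_index a ▸ ha))

theorem grN_degree_ne_bot [Finite ι] [DecidableEq σ] (hnd : Nondegenerate f) (ha : a ∈ Φ.sector i)
    (ha1 : ∀ k, (Φ.facet i).coord a k ≤ 1)
    (haW : ∀ k ∉ (Φ.facet i).walls Φ.direction, (Φ.facet i).coord a k < 1) :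
    grN f ((Φ.facet i).degree a) ≠ ⊥ := by
  obtain ⟨α, hα⟩ : ∃ α, (Φ.facet i).degree a = α + 1 := ⟨_, (sub_add_cancel _ 1).symm⟩
  obtain ⟨g, hg, hne⟩ := (Φ.facet i).exists_ne_sum_initialForm_smul hnd ha ha1 haW
  rw [hα] at hg ⊢
  have hgN : g.1 ∈ Nle f (α + 1) := fun b hb => by
    rw [(Φ.facet i).nu_eq_degree (g.2 hb).1, hg b hb]
  intro hbot
  rw [grN, ← LinearMap.le_ker_iff_map, Submodule.ker_mkQ] at hbot
  obtain ⟨p, hp, q, hq, hpq⟩ := Submodule.mem_sup.1 (hbot (Submodule.mem_sup_left hgN))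
  have hp : ∀ b ∈ p.support, Φ.weight b < Φ.level i (α + 1) := fun b hb =>
    Φ.weight_lt_of_nu_lt (hp b hb)
  obtain ⟨h, rfl⟩ := exists_eq_sum_of_mem_LIdeal hq
  obtain ⟨h', hle, hsum⟩ := Φ.exists_mem_weightLE hnd h (i := i) (α := α) (by
    rw [eq_sub_of_add_eq' hpq]
    exact sub_mem (Φ.coe_mem_weightLE hg) fun b hb => (hp b hb).le)
  rw [← hsum] at hpq
  refine hne (fun j => Φ.symbol i α (h' j)) ?_
  rw [← Φ.symbol_coe hg, ← hpq, map_add, map_sum, Φ.symbol_eq_zero fun b hb => (hp b hb).ne,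
    zero_add]
  exact Finset.sum_congr rfl fun j _ => Φ.symbol_X_mul_pderiv_mul (hle j)

end GenericFan

end Fan

section FacetFunctional

variable {σ : Type*} {f : MvPolynomial σ ℂ} {l d : (σ → ℝ) →ₗ[ℝ] ℝ}

/-- The linear functions `l` such that `l = 1` is the equation of a facet of the Newton boundary. -/
def IsFacetFunctional (f : MvPolynomial σ ℂ) (l : (σ → ℝ) →ₗ[ℝ] ℝ) : Prop :=
  l ∈ polar f ∧ Submodule.span ℝ (toR '' tight f l) = ⊤

theorem finite_image_tight (s : Set ((σ → ℝ) →ₗ[ℝ] ℝ)) : (tight f '' s).Finite := by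
  refine f.support.finite_toSet.finite_subsets.subset ?_
  rintro _ ⟨l, -, rfl⟩
  exact fun m hm => hm.1

theorem finite_isFacetFunctional (f : MvPolynomial σ ℂ) : {l | IsFacetFunctional f l}.Finite := by
  refine (finite_image_tight (f := f) _).of_finite_image
    fun l hl l' _ h => LinearMap.ext_on hl.2 ?_
  rintro _ ⟨m, hm, rfl⟩
  exact hm.2.trans (h ▸ hm : m ∈ tight f l').2.symm

instance : Finite {l // IsFacetFunctional f l} :=
  (finite_isFacetFunctional f).to_subtype

theorem exists_tight_ssubset (hl : l ∈ polar f) (hd : ∀ m ∈ tight f l, d (toR m) = 0)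
    (hpos : ∃ m ∈ f.support, 0 < d (toR m)) :
    ∃ t : ℝ, 0 ≤ t ∧ l + t • d ∈ polar f ∧ tight f l ⊂ tight f (l + t • d) := by
  classical
  obtain ⟨m₀, hm₀, hdm₀⟩ := hpos
  -- The ratio test of the simplex method: `t` is the first value at which a new point gets tight.
  obtain ⟨m₁, hm₁, hmin⟩ := ({m ∈ f.support | 0 < d (toR m)} : Finset (σ →₀ ℕ)).exists_min_image
    (fun m => (1 - l (toR m)) / d (toR m)) ⟨m₀, Finset.mem_filter.2 ⟨hm₀, hdm₀⟩⟩
  obtain ⟨hm₁, hdm₁⟩ := Finset.mem_filter.1 hm₁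
  set t := (1 - l (toR m₁)) / d (toR m₁) with ht
  have ht₀ : 0 ≤ t := div_nonneg (sub_nonneg.2 (hl _ hm₁)) hdm₁.le
  have hm₁t : m₁ ∈ tight f (l + t • d) :=
    ⟨hm₁, by simp [ht, div_mul_cancel₀ _ hdm₁.ne']⟩
  refine ⟨t, ht₀, fun m hm => ?_, Set.ssubset_iff_subset_ne.2 ⟨fun m hm => ⟨hm.1, ?_⟩, fun h => ?_⟩⟩
  · simp only [LinearMap.add_apply, LinearMap.smul_apply, smul_eq_mul]
    obtain hdm | hdm := le_or_gt (d (toR m)) 0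
    · exact add_le_of_le_of_nonpos (hl m hm) (mul_nonpos_of_nonneg_of_nonpos ht₀ hdm)
    · linarith [(le_div_iff₀ hdm).1 (hmin m (Finset.mem_filter.2 ⟨hm, hdm⟩))]
  · simp [hm.2, hd m hm]
  · exact hdm₁.ne' (hd m₁ (h ▸ hm₁t))

theorem IsFacetFunctional.nbFace [Nonempty σ] (hl : IsFacetFunctional f l) :
    NBFace f {x ∈ newtonPolytope f | l x = 1} := by
  refine nbFace_iff.2 ⟨?_, l, hl.1, rfl⟩
  rw [← convexHull_tight hl.1, convexHull_nonempty_iff, Set.nonempty_iff_ne_empty]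
  intro h
  have hspan := hl.2
  rw [h, Submodule.span_empty] at hspan
  exact bot_ne_top hspan

theorem NBFace.nonempty_index {Δ : Set (σ → ℝ)} (hΔ : NBFace f Δ) : Nonempty σ := by
  obtain ⟨⟨⟨y, hy⟩, -⟩, h₀⟩ := hΔ
  by_contra hσ
  rw [not_nonempty_iff] at hσ
  exact h₀ (Subsingleton.elim y 0 ▸ hy)

variable [Finite σ] {y : σ → ℝ}

theorem Convenient.exists_apply_pos (hconv : Convenient f) (hy : ∀ i, 0 < y i) (hd : d ≠ 0)
    (hdy : 0 ≤ d y) : ∃ m ∈ f.support, 0 < d (toR m) := by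
  classical
  have := Fintype.ofFinite σ
  by_contra! hle
  have hsingle (i) : d (Pi.single i 1) ≤ 0 := by
    obtain ⟨k, hk, hcoeff⟩ := hconv i
    have htoR : toR (Finsupp.single i k) = (k : ℝ) • Pi.single i 1 := by
      ext j
      simp [toR, Finsupp.single_apply, Pi.single_apply, eq_comm]
    have h := hle _ (mem_support_iff.2 hcoeff)
    rw [htoR, map_smul, smul_eq_mul] at h
    exact nonpos_of_mul_nonpos_right h (by positivity)
  have hsum : d y = ∑ i, y i * d (Pi.single i 1) := by
    conv_lhs => rw [← (Pi.basisFun ℝ σ).sum_repr y]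
    simp
  have hterm (i) : y i * d (Pi.single i 1) ≤ 0 :=
    mul_nonpos_of_nonneg_of_nonpos (hy i).le (hsingle i)
  have hzero := (Finset.sum_eq_zero_iff_of_nonpos fun i _ => hterm i).1
    ((Finset.sum_nonpos fun i _ => hterm i).antisymm (hsum ▸ hdy))
  refine hd ((Pi.basisFun ℝ σ).ext fun i => ?_)
  simpa [(hy i).ne'] using hzero i (Finset.mem_univ i)

theorem exists_isFacetFunctional_apply_le (hconv : Convenient f) (hy : ∀ i, 0 < y i)
    (hl : l ∈ polar f) : ∃ l', IsFacetFunctional f l' ∧ l y ≤ l' y := by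
  obtain ⟨l', ⟨hl', hle⟩, hmax⟩ := Set.Finite.exists_maximalFor' (tight f)
    {l' | l' ∈ polar f ∧ l y ≤ l' y} (finite_image_tight _) ⟨l, hl, le_rfl⟩
  refine ⟨l', ⟨hl', by_contra fun hspan => ?_⟩, hle⟩
  obtain ⟨d, hd, hker⟩ := Submodule.exists_le_ker_of_lt_top _ (lt_top_iff_ne_top.2 hspan)
  wlog hdy : 0 ≤ d y generalizing d
  · exact this (-d) (neg_ne_zero.2 hd) (by simpa) (by simpa using (not_le.1 hdy).le)
  obtain ⟨t, ht, hpolar, hss⟩ := exists_tight_ssubset hl'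
    (fun m hm => hker (Submodule.subset_span ⟨m, hm, rfl⟩)) (hconv.exists_apply_pos hy hd hdy)
  refine hss.not_subset (hmax ⟨hpolar, hle.trans ?_⟩ hss.subset)
  simpa using mul_nonneg ht hdy

theorem exists_isFacetFunctional_forall_le (hconv : Convenient f) (hy : ∀ i, 0 < y i) :
    ∃ l, IsFacetFunctional f l ∧ ∀ l' ∈ polar f, l' y ≤ l y := by
  obtain ⟨l₀, hl₀, -⟩ := exists_isFacetFunctional_apply_le (l := 0) hconv hy fun m _ => by simp
  obtain ⟨l, hl, hmax⟩ := (finite_isFacetFunctional f).exists_maximalFor (· y) _ ⟨l₀, hl₀⟩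
  refine ⟨l, hl, fun l' hl' => ?_⟩
  obtain ⟨l'', hl'', hle⟩ := exists_isFacetFunctional_apply_le hconv hy hl'
  exact hle.trans ((le_total (l y) (l'' y)).elim (hmax hl'') id)

end FacetFunctional

section SimplicialFacet

theorem linearIndependent_of_affineIndependent {K V ι : Type*} [Field K] [AddCommGroup V]
    [Module K V] {p : ι → V} (hp : AffineIndependent K p) (l : V →ₗ[K] K) (hl : ∀ i, l (p i) = 1) :
    LinearIndependent K p := by
  refine linearIndependent_iff'.2 fun s g hg => affineIndependent_iff.1 hp s g ?_ hg
  simpa [hl] using congr_arg l hg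

theorem repr_nonneg_of_mem_convexHull {ι E : Type*} [AddCommGroup E] [Module ℝ E]
    (b : Module.Basis ι ℝ E) {x : E} (hx : x ∈ convexHull ℝ (Set.range b)) (k : ι) :
    0 ≤ b.repr x k := by
  classical
  refine convexHull_min (t := {x | 0 ≤ b.coord k x}) ?_
    (convex_halfSpace_ge (b.coord k).isLinear 0) hx
  rintro _ ⟨i, rfl⟩
  rw [Set.mem_ofPred_eq, b.coord_apply, b.repr_self]
  exact Finsupp.single_nonneg.2 zero_le_one k

variable {σ : Type*} {f : MvPolynomial σ ℂ} {l : (σ → ℝ) →ₗ[ℝ] ℝ}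

theorem IsFacetFunctional.exists_basis [Finite σ] (hl : IsFacetFunctional f l)
    (hsimp : IsSimplex {x ∈ newtonPolytope f | l x = 1}) :
    ∃ b : Module.Basis σ ℝ (σ → ℝ),
      convexHull ℝ (Set.range b) = {x ∈ newtonPolytope f | l x = 1} := by
  obtain ⟨k, p, hp, hΔ⟩ := hsimp
  have hlp (i) : l (p i) = 1 :=
    (hΔ.ge (subset_convexHull ℝ _ (Set.mem_range_self i))).2
  have hspan : ⊤ ≤ Submodule.span ℝ (Set.range p) := by
    rw [← hl.2, Submodule.span_le]
    refine (subset_convexHull ℝ _).trans ?_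
    rw [convexHull_tight hl.1, hΔ]
    exact convexHull_min Submodule.subset_span (Submodule.convex _)
  let b := Module.Basis.mk (linearIndependent_of_affineIndependent hp l hlp) hspan
  refine ⟨b.reindex (b.indexEquiv (Pi.basisFun ℝ σ)), ?_⟩
  rw [b.range_reindex, Module.Basis.coe_mk, hΔ]

theorem exists_mem_tight_of_convexHull_range_eq [Finite σ] {b : Module.Basis σ ℝ (σ → ℝ)}
    (hl : l ∈ polar f) (hb : convexHull ℝ (Set.range b) = {x ∈ newtonPolytope f | l x = 1})
    (k : σ) :
    ∃ m ∈ tight f l, toR m = b k := by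
  classical
  have := Fintype.ofFinite σ
  have hbk : b k ∈ convexHull ℝ (toR '' tight f l) := by
    rw [convexHull_tight hl, ← hb]
    exact subset_convexHull ℝ _ (Set.mem_range_self k)
  -- The `k`-th coordinate attains its maximum over the hull only at `b k`.
  obtain ⟨_, ⟨m, hm, rfl⟩, hle⟩ :=
    ((b.coord k).convexOn convex_univ).exists_ge_of_mem_convexHull (Set.subset_univ _) hbk
  have hnonneg := repr_nonneg_of_mem_convexHull b (hb.ge ⟨toR_mem_newtonPolytope hm.1, hm.2⟩)
  have hlb (i) : l (b i) = 1 := (hb.le (subset_convexHull ℝ _ (Set.mem_range_self i))).2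
  have hsum : ∑ i, b.repr (toR m) i = 1 := by
    rw [← hm.2]
    conv_rhs => rw [← b.sum_repr (toR m), map_sum]
    simp [hlb]
  rw [← Finset.add_sum_erase _ _ (Finset.mem_univ k)] at hsum
  rw [b.coord_apply, b.coord_apply, b.repr_self, Finsupp.single_eq_same] at hle
  have hrest := Finset.sum_nonneg fun i (_ : i ∈ Finset.univ.erase k) => hnonneg i
  have hzero := (Finset.sum_eq_zero_iff_of_nonneg fun i _ => hnonneg i).1
    (show ∑ i ∈ Finset.univ.erase k, b.repr (toR m) i = 0 by linarith)
  refine ⟨m, hm, b.ext_elem fun i => ?_⟩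
  rw [b.repr_self]
  obtain rfl | hi := eq_or_ne i k
  · rw [Finsupp.single_eq_same]
    linarith
  · rw [Finsupp.single_eq_of_ne hi, hzero i (Finset.mem_erase.2 ⟨hi, Finset.mem_univ i⟩)]

theorem IsFacetFunctional.exists_facet [Fintype σ] (hl : IsFacetFunctional f l)
    (hsimp : IsSimplex {x ∈ newtonPolytope f | l x = 1}) : ∃ D : Facet f, D.height = l := by
  obtain ⟨b, hb⟩ := hl.exists_basis hsimp
  choose vertex hvertex hbasis using exists_mem_tight_of_convexHull_range_eq hl.1 hb
  let D : SimplicialCone σ := ⟨vertex, b, fun k => (hbasis k).symm⟩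
  have hD : D.height = l := b.ext fun k => by
    rw [← hbasis]
    exact (D.degree_vertex k).trans (hvertex k).2.symm
  exact ⟨⟨D, fun k => (hvertex k).1, fun m hm => (LinearMap.congr_fun hD _).trans_le (hl.1 m hm),
    fun m hm hm1 => repr_nonneg_of_mem_convexHull b (hb.ge
      ⟨toR_mem_newtonPolytope hm, (LinearMap.congr_fun hD _).symm.trans hm1⟩)⟩, hD⟩

theorem Facet.repr_nonneg [Fintype σ] (D : Facet f) {y : σ → ℝ}
    (h : ∀ l ∈ polar f, l y ≤ D.height y) (k : σ) :
    0 ≤ D.basis.repr y k := by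
  obtain ⟨ε, ⟨hpolar, -⟩, hε⟩ := ((eventually_add_smul_mem_polar (d := -D.basis.coord k)
    D.height_mem_polar fun m hm hm1 => neg_nonpos.2 (D.mem_cone m hm hm1 k)).and
      self_mem_nhdsWithin).exists
  have hle := h _ hpolar
  simp only [LinearMap.add_apply, LinearMap.smul_apply, LinearMap.neg_apply, smul_eq_mul,
    add_le_iff_nonpos_right, Module.Basis.coord_apply] at hle
  exact neg_nonpos.1 (nonpos_of_mul_nonpos_right hle hε)

end SimplicialFacet

section ExistsFan

open Filter Topology

variable {σ : Type*} [Fintype σ] {f : MvPolynomial σ ℂ}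

theorem Convenient.exists_mem_halfOpen (hconv : Convenient f)
    (F : {l // IsFacetFunctional f l} → Facet f) (hF : ∀ l, (F l).height = l)
    {ξ : σ → ℝ} (hξ : ∀ i, 0 < ξ i) (a : σ →₀ ℕ) :
    ∃ l, a ∈ (F l).halfOpen ((F l).walls ξ) := by
  have hcover : ∀ᶠ ε : ℝ in 𝓝[>] 0, ∃ l, ∀ k, 0 ≤ (F l).coord a k + ε * (F l).basis.repr ξ k := by
    filter_upwards [self_mem_nhdsWithin] with ε hε
    obtain ⟨l, hl, hmax⟩ := exists_isFacetFunctional_forall_le hconv (y := toR a + ε • ξ)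
      fun i => add_pos_of_nonneg_of_pos (Nat.cast_nonneg _) (mul_pos hε (hξ i))
    refine ⟨⟨l, hl⟩, fun k => ?_⟩
    have hk := (F ⟨l, hl⟩).repr_nonneg (by rwa [hF]) k
    rwa [map_add, map_smul] at hk
  obtain ⟨l, hl⟩ := frequently_exists.1 hcover.frequently
  refine ⟨l, fun k => ?_, fun k hk => ?_⟩
  · have hlim : Tendsto (fun ε : ℝ => (F l).coord a k + ε * (F l).basis.repr ξ k) (𝓝[>] 0)
        (𝓝 ((F l).coord a k)) :=
      tendsto_nhdsWithin_of_tendsto_nhds (Continuous.tendsto' (by fun_prop) _ _ (by simp))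
    exact ge_of_tendsto_of_frequently hlim (hl.mono fun ε hε => hε k)
  · obtain ⟨ε, hε, hε₀⟩ := (hl.and_eventually self_mem_nhdsWithin).exists
    linarith [hε k, mul_neg_of_pos_of_neg hε₀ hk]

/-- The fan of all facets, swept by a generic positive direction. -/
noncomputable def genericFan (hconv : Convenient f)
    (F : {l // IsFacetFunctional f l} → Facet f) (hF : ∀ l, (F l).height = l)
    {ξ : σ → ℝ} (hξ : ∀ i, 0 < ξ i) (hinj : Set.InjOn (· ξ) {l | IsFacetFunctional f l}) :
    GenericFan f {l // IsFacetFunctional f l} where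
  facet := F
  direction := ξ
  height_direction_injective l l' h := Subtype.ext (hinj l.2 l'.2 (by simpa [hF] using h))
  exists_mem_halfOpen := hconv.exists_mem_halfOpen F hF hξ

theorem exists_mem_injOn_apply {E : Type*} [NormedAddCommGroup E] [NormedSpace ℝ E]
    [FiniteDimensional ℝ E] {S : Set (E →ₗ[ℝ] ℝ)} (hS : S.Countable) {U : Set E} (hU : IsOpen U)
    (hne : U.Nonempty) : ∃ ξ ∈ U, Set.InjOn (· ξ) S := by
  have : CompleteSpace E := FiniteDimensional.complete ℝ E
  have hdense : Dense (⋂ p ∈ S ×ˢ S \ Set.diagonal _,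
      ((LinearMap.ker (p.1 - p.2) : Submodule ℝ E) : Set E)ᶜ) := by
    refine dense_biInter_of_isOpen
      (fun p _ => (Submodule.closed_of_finiteDimensional _).isOpen_compl)
      ((hS.prod hS).mono Set.sdiff_subset) fun p hp => ?_
    rw [← interior_eq_empty_iff_dense_compl, ← Set.not_nonempty_iff_eq_empty]
    intro hint
    have htop := Submodule.eq_top_of_nonempty_interior' _ hint
    exact hp.2 (sub_eq_zero.1 (LinearMap.ker_eq_top.1 htop))
  obtain ⟨ξ, hξU, hξ⟩ := hdense.inter_open_nonempty U hU hne
  refine ⟨ξ, hξU, fun l hl l' hl' h => by_contra fun hll' => ?_⟩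
  exact Set.mem_iInter₂.1 hξ (l, l') ⟨⟨hl, hl'⟩, hll'⟩ (sub_eq_zero.2 h)

end ExistsFan

section BoxPoint

variable {σ : Type*} [Fintype σ] {f : MvPolynomial σ ℂ} {l : (σ → ℝ) →ₗ[ℝ] ℝ} {Δ : Set (σ → ℝ)}

namespace Facet

variable (D : Facet f) {x : σ → ℝ}

theorem repr_nonneg_of_mem_newtonPolytope (hx : x ∈ newtonPolytope f) (h : D.height x = 1) (k : σ) :
    0 ≤ D.basis.repr x k := by
  refine convexHull_min (t := {x | 0 ≤ D.basis.coord k x}) (Set.image_subset_iff.2 fun m hm => ?_)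
    (convex_halfSpace_ge (D.basis.coord k).isLinear 0)
    ((convexHull_tight D.height_mem_polar).ge ⟨hx, h⟩)
  exact D.mem_cone m hm.1 hm.2 k

theorem mem_range_basis_of_mem_extremePoints (hl : l ∈ polar f)
    (hx : x ∈ Set.extremePoints ℝ {x ∈ newtonPolytope f | l x = 1}) (h : D.height x = 1) :
    x ∈ Set.range D.basis := by
  classical
  have hx₀ := D.repr_nonneg_of_mem_newtonPolytope hx.1.1 h
  let s := D.basis '' {k | l (D.basis k) = 1}
  have hs : convexHull ℝ s ⊆ {x ∈ newtonPolytope f | l x = 1} := by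
    refine convexHull_min (Set.image_subset_iff.2 fun k hk => ⟨?_, hk⟩)
      ((convex_convexHull ℝ _).inter (convex_hyperplane l.isLinear 1))
    exact D.basis_apply k ▸ toR_mem_newtonPolytope (D.vertex_mem_support k)
  have hxs : x ∈ convexHull ℝ s := by
    rw [← D.basis.sum_repr x, ← Finset.sum_filter_of_ne fun k _ => left_ne_zero_of_smul]
    refine (convex_convexHull ℝ s).sum_mem (fun k _ => hx₀ k) ?_ fun k hk => ?_
    · rw [Finset.sum_filter_ne_zero, ← D.height_eq_sum_repr, h]
    · refine subset_convexHull ℝ s ⟨k, (congr_arg l (D.basis_apply k)).trans ?_, rfl⟩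
      exact D.apply_vertex_eq_one hl hx₀ (hx.1.2.trans h.symm) (Finset.mem_filter.1 hk).2
  exact Set.image_subset_range _ _ (extremePoints_convexHull_subset
    (inter_extremePoints_subset_extremePoints_of_subset hs ⟨hxs, hx⟩))

theorem repr_lt_one_of_mem_box (hΔ : NBFace f Δ) (hx : x ∈ Box Δ) (hx₀ : ∀ k, 0 ≤ D.basis.repr x k)
    (k : σ) : D.basis.repr x k < 1 := by
  obtain ⟨-, l, hl, rfl⟩ := nbFace_iff.1 hΔ
  obtain ⟨s, hs, q, hq, rfl⟩ := hx
  have hle : ∀ b ∈ s, q b * D.height b ≤ q b * l b := fun b hb => by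
    rw [(hs hb).1.2]
    gcongr
    · exact (hq b hb).1
    · exact apply_le_one_of_mem_polar D.height_mem_polar (hs hb).1.1
  have heq : ∑ b ∈ s, q b * D.height b = ∑ b ∈ s, q b * l b :=
    (Finset.sum_le_sum hle).antisymm (by simpa using D.apply_le_height hl hx₀)
  have hterm : ∀ b ∈ s, b ≠ D.basis k → q b * D.basis.repr b k = 0 := fun b hb hbk => by
    have hqb := (Finset.sum_eq_sum_iff_of_le hle).1 heq b hb
    rw [(hs hb).1.2] at hqb
    refine mul_eq_zero.2 (or_iff_not_imp_left.2 fun hqb₀ => ?_)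
    obtain ⟨k', rfl⟩ := D.mem_range_basis_of_mem_extremePoints hl (hs hb)
      (mul_left_cancel₀ hqb₀ hqb)
    rw [D.basis.repr_self, Finsupp.single_eq_of_ne]
    rintro rfl
    exact hbk rfl
  simp only [map_sum, map_smul, Finsupp.coe_finsetSum, Finset.sum_apply, Finsupp.smul_apply,
    smul_eq_mul]
  by_cases hk : D.basis k ∈ s
  · rw [Finset.sum_eq_single_of_mem _ hk hterm, D.basis.repr_self, Finsupp.single_eq_same, mul_one]
    exact (hq _ hk).2
  · rw [Finset.sum_eq_zero fun b hb => hterm b hb (ne_of_mem_of_not_mem hb hk)]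
    exact zero_lt_one

theorem le_card_repr_eq_zero (hΔ : NBFace f Δ) (hx : x ∈ cone0 Δ)
    (hx₀ : ∀ k, 0 ≤ D.basis.repr x k) :
    Fintype.card σ - 1 - faceDim Δ ≤ Finset.card {k | D.basis.repr x k = 0} := by
  obtain ⟨-, l, hl, rfl⟩ := nbFace_iff.1 hΔ
  obtain ⟨t, ht, y, ⟨hy, hly⟩, rfl⟩ := hx
  have heq : l (t • y) = D.height (t • y) := by
    refine (D.apply_le_height hl hx₀).antisymm ?_
    rw [map_smul, map_smul, hly]
    exact smul_le_smul_of_nonneg_left (apply_le_one_of_mem_polar D.height_mem_polar hy) ht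
  let p (k : {k // ¬D.basis.repr (t • y) k = 0}) := D.basis k
  have hp : AffineIndependent ℝ p :=
    D.basis.linearIndependent.affineIndependent.comp_embedding (Function.Embedding.subtype _)
  have hsub : Set.range p ⊆ {x ∈ newtonPolytope f | l x = 1} := by
    rintro _ ⟨⟨k, hk⟩, rfl⟩
    change D.basis k ∈ _
    rw [D.basis_apply]
    exact ⟨toR_mem_newtonPolytope (D.vertex_mem_support k), D.apply_vertex_eq_one hl hx₀ heq hk⟩
  have hdim : Module.finrank ℝ (vectorSpan ℝ (Set.range p)) ≤
      faceDim {x ∈ newtonPolytope f | l x = 1} := by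
    rw [faceDim, direction_affineSpan]
    exact Submodule.finrank_mono (vectorSpan_mono ℝ hsub)
  have hcard := hp.card_le_finrank_succ
  rw [Fintype.card_subtype_compl, Fintype.card_subtype] at hcard
  omega

end Facet

end BoxPoint

section Direction

open Filter Topology

variable {σ : Type*}

theorem SimplicialCone.exists_generic_direction [Finite σ] (D : SimplicialCone σ) {v : σ → ℝ}
    (hv : ∀ i, 0 < v i) (hv₀ : ∀ k, 0 ≤ D.basis.repr v k) {J : Finset σ}
    (hJ : ∀ k ∈ J, D.basis.repr v k = 0) {S : Set ((σ → ℝ) →ₗ[ℝ] ℝ)} (hS : S.Countable) :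
    ∃ ξ, (∀ i, 0 < ξ i) ∧ D.walls ξ = J ∧ Set.InjOn (· ξ) S := by
  classical
  have := Fintype.ofFinite σ
  let s (k : σ) : ℝ := if k ∈ J then -1 else 1
  let U : Set (σ → ℝ) := {ξ | ∀ k, 0 < ξ k ∧ 0 < s k * D.basis.coord k ξ}
  have hU : IsOpen U := by
    simp only [U, Set.ofPred_forall]
    exact isOpen_iInter_of_finite fun k => (isOpen_lt continuous_const (continuous_apply k)).inter
      (isOpen_lt continuous_const
        (continuous_const.mul (D.basis.coord k).continuous_of_finiteDimensional))
  have hne : U.Nonempty := by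
    have hpos : ∀ᶠ δ : ℝ in 𝓝[>] 0, ∀ i, 0 < (v + δ • D.basis.equivFun.symm s) i := by
      refine eventually_all.2 fun i => ?_
      have hlim : Tendsto (fun δ : ℝ => (v + δ • D.basis.equivFun.symm s) i) (𝓝[>] 0) (𝓝 (v i)) :=
        tendsto_nhdsWithin_of_tendsto_nhds (Continuous.tendsto' (by fun_prop) _ _ (by simp))
      exact hlim.eventually_const_lt (hv i)
    obtain ⟨δ, hδ, hδ₀⟩ := (hpos.and self_mem_nhdsWithin).exists
    refine ⟨_, fun k => ⟨hδ k, ?_⟩⟩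
    have hk : D.basis.coord k (v + δ • D.basis.equivFun.symm s) = D.basis.repr v k + δ * s k := by
      rw [map_add, map_smul, smul_eq_mul, D.basis.coord_apply, D.basis.coord_equivFun_symm]
    rw [hk]
    by_cases hkJ : k ∈ J
    · simpa [s, hkJ, hJ k hkJ] using hδ₀
    · simpa [s, hkJ] using add_pos_of_nonneg_of_pos (hv₀ k) hδ₀
  obtain ⟨ξ, hξ, hinj⟩ := exists_mem_injOn_apply hS hU hne
  refine ⟨ξ, fun i => (hξ i).1, Set.ext fun k => ?_, hinj⟩
  have hk := (hξ k).2
  by_cases hkJ : k ∈ J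
  · simpa [s, hkJ, walls] using hk
  · simpa [s, hkJ, walls] using hk.le

end Direction

section Spectrum

variable {σ : Type*} [Fintype σ] {f : MvPolynomial σ ℂ}

theorem SimplicialCone.coord_add_sum_vertex [DecidableEq σ] (D : SimplicialCone σ) (a : σ →₀ ℕ)
    (J : Finset σ) (k : σ) :
    D.coord (a + ∑ p ∈ J, D.vertex p) k = D.coord a k + if k ∈ J then 1 else 0 := by
  simp [map_sum, Finset.sum_apply, coord_vertex, Pi.single_apply]

theorem SimplicialCone.degree_add_sum_vertex (D : SimplicialCone σ) (a : σ →₀ ℕ) (J : Finset σ) :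
    D.degree (a + ∑ p ∈ J, D.vertex p) = D.degree a + J.card := by
  simp [degree_vertex]

theorem GenericFan.grN_degree_add_card_ne_bot [DecidableEq σ] {ι : Type*} [Finite ι]
    (Φ : GenericFan f ι) (hnd : Nondegenerate f) {i : ι} {J : Finset σ}
    (hJ : (Φ.facet i).walls Φ.direction = J)
    {a : σ →₀ ℕ} (ha : a ∈ (Φ.facet i).cone) (ha1 : ∀ k, (Φ.facet i).coord a k < 1)
    (haJ : ∀ k ∈ J, (Φ.facet i).coord a k = 0) :
    grN f ((Φ.facet i).degree a + J.card) ≠ ⊥ := by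
  rw [← SimplicialCone.degree_add_sum_vertex]
  refine Φ.grN_degree_ne_bot hnd ⟨?_, fun k hk => ?_⟩ (fun k => ?_) fun k hk => ?_
  · exact add_mem ha (sum_mem fun p _ => (Φ.facet i).vertex_mem_cone p)
  all_goals rw [SimplicialCone.coord_add_sum_vertex]
  · rw [hJ] at hk
    rw [haJ k hk, if_pos (by exact hk)]
    norm_num
  · split_ifs with hk
    · rw [haJ k hk, zero_add]
    · rw [add_zero]
      exact (ha1 k).le
  · rw [hJ] at hk
    rw [if_neg (by exact hk), add_zero]
    exact ha1 k

end Spectrum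

end ToricNewton

open ToricNewton in
theorem integral_shifts_in_toric_spectrum_general {σ : Type*} [Fintype σ] [DecidableEq σ]
    {f : MvPolynomial σ ℂ} (hconv : Convenient f) (hnd : Nondegenerate f)
    (hsimp : ∀ Δ, NBFace f Δ → IsSimplex Δ) {v : σ → ℕ} (hv : natToR v ∈ BoxP f)
    (hv1 : ∀ i, 1 ≤ v i) {Δ : Set (σ → ℝ)} (hΔ : NBFace f Δ) (hvΔ : natToR v ∈ cone0 Δ) {j : ℕ}
    (hj : j ≤ Fintype.card σ - 1 - faceDim Δ) : grN f (nu f (natToR v) + (j : ℝ)) ≠ ⊥ := by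
  obtain ⟨a, ha⟩ : ∃ a : σ →₀ ℕ, toR a = natToR v := ⟨Finsupp.equivFunOnFinite.symm v, rfl⟩
  have hpos (i) : 0 < toR a i := ha ▸ Nat.cast_pos.2 (hv1 i)
  rw [← ha] at hv hvΔ ⊢
  have := hΔ.nonempty_index
  choose F hF using fun l : {l // IsFacetFunctional f l} => l.2.exists_facet (hsimp _ l.2.nbFace)
  obtain ⟨l, hl, hmax⟩ := exists_isFacetFunctional_forall_le hconv hpos
  let D := F ⟨l, hl⟩
  have hcone : a ∈ D.cone := D.repr_nonneg (by rwa [hF])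
  obtain ⟨Δ', ⟨hΔ', -⟩, hbox⟩ := Set.mem_iUnion₂.1 hv
  obtain ⟨J, hJ, rfl⟩ :=
    Finset.exists_subset_card_eq (hj.trans (D.le_card_repr_eq_zero hΔ hvΔ hcone))
  have hJ₀ : ∀ k ∈ J, D.basis.repr (toR a) k = 0 := fun k hk => (Finset.mem_filter.1 (hJ hk)).2
  obtain ⟨ξ, hξ, hwalls, hinj⟩ := D.exists_generic_direction hpos hcone hJ₀
    (finite_isFacetFunctional f).countable
  rw [D.nu_eq_degree hcone]
  exact (genericFan hconv F hF hξ hinj).grN_degree_add_card_ne_bot hnd hwalls hcone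
    (D.repr_lt_one_of_mem_box hΔ' hbox hcone) hJ₀

open ToricNewton in
/-- integral shifts in the toric Newton spectrum: if
`v ∈ Box(P) ∩ ℕⁿ` has all coordinates `≥ 1` and `Δ(v)` is the smallest closed
face of the Newton boundary whose cone contains `v`, then the values
`ν(v), ν(v)+1, …, ν(v)+n-1-dim Δ(v)` all occur in the toric Newton spectrum. -/
theorem integral_shifts_in_toric_spectrum {n : ℕ} (hn : 1 ≤ n)
    (f : MvPolynomial (Fin n) ℂ) (hconv : Convenient f) (hnd : Nondegenerate f)
    (hsimp : ∀ Δ : Set (Fin n → ℝ), NBFace f Δ → IsSimplex Δ)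
    (v : Fin n → ℕ) (hv : natToR v ∈ BoxP f) (hv1 : ∀ i, 1 ≤ v i)
    (Δ₀ : Set (Fin n → ℝ)) (hΔ₀ : NBFace f Δ₀) (hvΔ₀ : natToR v ∈ cone0 Δ₀)
    (hmin : ∀ Δ : Set (Fin n → ℝ), NBFace f Δ → natToR v ∈ cone0 Δ → Δ₀ ⊆ Δ) :
    ∀ j : ℕ, j ≤ n - 1 - faceDim Δ₀ →
      grN f (nu f (natToR v) + (j : ℝ)) ≠ ⊥ :=
  fun _ hj => integral_shifts_in_toric_spectrum_general hconv hnd hsimp hv hv1 hΔ₀ hvΔ₀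
    (by rwa [Fintype.card_fin])
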